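/- Let k be a field, let kN(n) be the quotient of the free k-algebra on generators Y_1, …, Y_{n−1} by the two-sided ideal generated by Y_i^2 (1 ≤ i ≤ n−1), Y_iY_{i+1}Y_i − Y_{i+1}Y_iY_{i+1} (1 ≤ i ≤ n−2), and Y_iY_j − Y_jY_i (|i−j| ≥ 2), and let k be the left kN(n)-module whose underlying vector space is k and on which each Y_i acts as zero. Then for every integer d ≥ 0, Ext^d_{kN(n)}(k, k) is a k-vector space of dimension binom(d + n − 2, n − 2). -/

import Mathlib

/-- Index type for the generators `Y_1, …, Y_{n-1}` of the nilCoxeter algebra `kN(n)`. -/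
abbrev NIdx (n : ℕ) := {i : ℕ // 1 ≤ i ∧ i + 1 ≤ n}

variable (k : Type) [Field k]

/-- The generator `Y_i` in the free `k`-algebra (junk value `0` outside `1 ≤ i ≤ n-1`). -/
noncomputable def Yf (n : ℕ) (i : ℕ) : FreeAlgebra k (NIdx n) :=
  if h : 1 ≤ i ∧ i + 1 ≤ n then FreeAlgebra.ι k ⟨i, h⟩ else 0

/-- The defining relations of the nilCoxeter algebra `kN(n)` of `S_n` over the field `k`:
`Y_i² = 0`, the braid relations, and the commutation relations for `|i - j| ≥ 2`. -/
inductive NRel (n : ℕ) : FreeAlgebra k (NIdx n) → FreeAlgebra k (NIdx n) → Prop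
  | sq (i : NIdx n) : NRel n (FreeAlgebra.ι k i * FreeAlgebra.ι k i) 0
  | braid (i j : NIdx n) (h : j.1 = i.1 + 1) :
      NRel n (FreeAlgebra.ι k i * FreeAlgebra.ι k j * FreeAlgebra.ι k i)
        (FreeAlgebra.ι k j * FreeAlgebra.ι k i * FreeAlgebra.ι k j)
  | comm (i j : NIdx n) (h : i.1 + 2 ≤ j.1 ∨ j.1 + 2 ≤ i.1) :
      NRel n (FreeAlgebra.ι k i * FreeAlgebra.ι k j)
        (FreeAlgebra.ι k j * FreeAlgebra.ι k i)

/-- The nilCoxeter algebra `kN(n)` of the symmetric group `S_n` over the field `k`. -/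
abbrev Nring (n : ℕ) := RingQuot (NRel k n)

/-- The augmentation `kN(n) → k`, sending every generator `Y_i` to `0`. -/
noncomputable def Naug (n : ℕ) : Nring k n →ₐ[k] k :=
  RingQuot.liftAlgHom k ⟨FreeAlgebra.lift k (fun _ : NIdx n => (0 : k)), by
    rintro x y h
    induction h <;> simp⟩

/-!
For a set `J` of simple transpositions let `N J` be the nilCoxeter algebra of the parabolic subgroup
generated by `J`. By induction on `|J|`, the dimension of `Ext^n(k, k)` over `N J` is the number of
multisets of size `n` in `J`.

Let `[l, m]` be the topmost maximal interval in `J`. The functions on the `r`-element subsets of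
`[l, m]`, or of `[l, m + 1]`, form `N J`-modules `V r` and `W r`, on which `Y_i` evaluates a
function at the subset with `i + 1` replaced by `i`. Sorting the subsets of `[l, m + 1]` by whether
they contain `m + 1` gives exact sequences `0 → V r → W (r + 1) → V (r + 1) → 0`.

Let `p + r = m + 1`. The subsets also index the minimal coset representatives of the parabolic
subgroup of `J \ {p}`, whose products of generators form a basis of `N J` over `N (J \ {p})`; their
independence is visible in the action of `N J` on functions on permutations. It follows that `W r`
is coinduced from the trivial module of `N (J \ {p})`, so that Shapiro's lemma identifies
`Ext(k, W r)` with `Ext(k, k)` over `N (J \ {p})`. As `N (J \ {p})` is also a quotient of `N J`,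
every class in `Ext(k, W r)` comes from a class in `Ext(k, k)` over `N J` through an embedding
`k → V (r - 1) → W r`. The long exact sequences therefore split into short ones, and by induction

  `dim Ext^{n+1}(k, V r) = multichoose (|J| - 1) (n + 1) + dim Ext^n(k, V (r + 1))`,

which is Pascal's recursion, because `V 0` and `V (m + 1 - l)` are both trivial.
-/

namespace NilCoxeter

open Finset (powersetCard Icc mem_Icc mem_powersetCard mem_insert mem_erase)

section Homology

open CategoryTheory Abelian Limits

universe w v v' u u'

variable {C : Type u} [Category.{v} C] [Abelian C] {D : Type u'} [Category.{v'} D] [Abelian D]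

lemma rank_homology_eq_of_surjective {R : Type*} [Ring R] (S : ShortComplex (ModuleCat.{v} R))
    {E : Type v} [AddCommGroup E] [Module R E] (φ : LinearMap.ker S.g.hom →ₗ[R] E)
    (hφ : Function.Surjective φ) (hker : ∀ x, φ x = 0 ↔ ∃ y, S.f.hom y = x.1) :
    Module.rank R S.homology = Module.rank R E := by
  have hrange : LinearMap.range S.moduleCatToCycles = LinearMap.ker φ := by
    ext x
    simp only [LinearMap.mem_range, LinearMap.mem_ker, hker, Subtype.ext_iff]
    rfl
  exact (S.moduleCatHomologyIso.toLinearEquiv.trans ((Submodule.quotEquivOfEq _ _ hrange).trans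
    (φ.quotKerEquivOfSurjective hφ))).rank_eq

lemma extMk_zero_eq_zero_iff [HasExt.{w} C] {X Y : C} (P : ProjectiveResolution X)
    (f : P.complex.X 0 ⟶ Y) (hf : P.complex.d 1 0 ≫ f = 0) :
    P.extMk f 1 rfl hf = 0 ↔ f = 0 := by
  refine ⟨fun h ↦ ?_, fun h ↦ by subst h; simp⟩
  rw [← P.extEquivCohomologyClass.apply_eq_iff_eq, P.extEquivCohomologyClass_extMk,
    P.extEquivCohomologyClass_zero, CochainComplex.HomComplex.CohomologyClass.mk_eq_zero_iff,
    CochainComplex.HomComplex.Cocycle.toSingleMk_mem_coboundaries_iff _ _ _ _ _ 1 (by lia)] at h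
  obtain ⟨g, hg⟩ := h
  have hzero : IsZero (P.cochainComplex.X 1) := CochainComplex.isZero_of_isStrictlyLE _ 0 1
  rw [hzero.eq_of_src g 0, comp_zero, eq_comm] at hg
  rwa [← cancel_epi (P.cochainComplexXIso (-0) 0 rfl).hom, comp_zero]

lemma smul_extMk {R : Type*} [Ring R] [Linear R C] [HasExt.{w} C] {X Y : C}
    (P : ProjectiveResolution X) {n : ℕ} (r : R) (f : P.complex.X n ⟶ Y) (m : ℕ)
    (hm : n + 1 = m) (hf : P.complex.d m n ≫ f = 0) :
    r • P.extMk f m hm hf = P.extMk (r • f) m hm (by rw [Linear.comp_smul, hf, smul_zero]) := by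
  rw [Ext.smul_eq_comp_mk₀, P.extMk_comp_mk₀]
  simp only [Linear.comp_smul, Category.comp_id]

lemma rank_derivedExt_eq_rank_ext {R : Type*} [Ring R] [Linear R C] [EnoughProjectives C]
    [HasExt.{v} C] (X Y : C) (n : ℕ) :
    Module.rank R (((_root_.Ext R C n).obj (Opposite.op X)).obj Y) =
      Module.rank R (Ext.{v} X Y n) := by
  let P : ProjectiveResolution X := projectiveResolution X
  let K := P.complex.linearYonedaObj R Y
  have d_apply (i j : ℕ) (f : P.complex.X i ⟶ Y) : (K.d i j).hom f = P.complex.d j i ≫ f := by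
    rw [P.complex.linearYonedaObj_d]
    rfl
  let S := K.sc' ((ComplexShape.up ℕ).prev n) n (n + 1)
  have hcocycle (f : LinearMap.ker S.g.hom) : P.complex.d (n + 1) n ≫ f.1 = 0 :=
    (d_apply n (n + 1) f.1).symm.trans f.2
  let φ : LinearMap.ker S.g.hom →ₗ[R] Ext.{v} X Y n :=
    { toFun f := P.extMk f.1 (n + 1) rfl (hcocycle f)
      map_add' f g := (P.add_extMk _ _ _ _ _ _).symm
      map_smul' r f := (smul_extMk P r _ _ _ _).symm }
  rw [(P.isoExt n Y).toLinearEquiv.rank_eq,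
    (K.homologyIsoSc' _ n (n + 1) rfl (by simp)).toLinearEquiv.rank_eq]
  refine rank_homology_eq_of_surjective S φ (fun α ↦ ?_) (fun f ↦ ?_)
  · obtain ⟨f, hf, rfl⟩ := P.extMk_surjective α (n + 1) rfl
    exact ⟨⟨f, (d_apply n (n + 1) f).trans hf⟩, rfl⟩
  · obtain _ | n := n
    · have hzero : K.d ((ComplexShape.up ℕ).prev 0) 0 = 0 := K.shape _ _ (by simp)
      refine (extMk_zero_eq_zero_iff P f.1 (hcocycle f)).trans ⟨fun h ↦ ⟨0, ?_⟩, fun ⟨g, hg⟩ ↦ ?_⟩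
      · exact (map_zero _).trans h.symm
      · exact hg.symm.trans (congrArg (fun d ↦ d.hom g) hzero)
    · refine (P.extMk_eq_zero_iff f.1 _ rfl (hcocycle f) ((ComplexShape.up ℕ).prev (n + 1))
        (by simp)).trans ?_
      exact exists_congr fun g ↦ by rw [← d_apply]; rfl

lemma rank_ext_succ_eq_add {K : Type*} [Field K] [Linear K C] [HasExt.{w} C] {S : ShortComplex C}
    (hS : S.ShortExact) (X : C) (n : ℕ)
    (hsurj : ∀ m (x₂ : Ext.{w} X S.X₂ m),
      ∃ x₁ : Ext X S.X₁ m, x₁.comp (.mk₀ S.f) (add_zero m) = x₂) :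
    Module.rank K (Ext X S.X₁ (n + 1)) =
      Module.rank K (Ext X S.X₂ (n + 1)) + Module.rank K (Ext X S.X₃ n) := by
  let δ : Ext.{w} X S.X₃ n →ₗ[K] Ext X S.X₁ (n + 1) :=
    (Ext.bilinearCompOfLinear K X S.X₃ S.X₁ n 1 (n + 1) rfl).flip hS.extClass
  let f₁ : Ext.{w} X S.X₁ (n + 1) →ₗ[K] Ext X S.X₂ (n + 1) :=
    (Ext.bilinearCompOfLinear K X S.X₁ S.X₂ (n + 1) 0 (n + 1) rfl).flip (.mk₀ S.f)
  have hf₁ : Function.Surjective f₁ := hsurj (n + 1)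
  have hδ : Function.Injective δ := by
    rw [injective_iff_map_eq_zero]
    intro x₃ hx₃
    obtain ⟨x₂, rfl⟩ := Ext.covariant_sequence_exact₃ X hS x₃ rfl hx₃
    obtain ⟨x₁, rfl⟩ := hsurj n x₂
    rw [Ext.comp_assoc_of_third_deg_zero, Ext.mk₀_comp_mk₀, S.zero, Ext.mk₀_zero, Ext.comp_zero]
  have hker : LinearMap.range δ = LinearMap.ker f₁ := by
    ext x₁
    refine ⟨?_, fun hx₁ ↦ Ext.covariant_sequence_exact₁ X hS x₁ hx₁ rfl⟩
    rintro ⟨x₃, rfl⟩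
    exact (x₃.comp_assoc_of_third_deg_zero _ _ rfl).trans (by rw [hS.extClass_comp, Ext.comp_zero])
  rw [← f₁.rank_range_add_rank_ker, ← hker, rank_range_of_injective δ hδ,
    rank_range_of_surjective f₁ hf₁]

lemma rank_ext_zero_eq_of_surjective {K : Type*} [CommRing K] [Linear K C] [HasExt.{w} C]
    {S : ShortComplex C} (hS : S.ShortExact) (X : C)
    (hsurj : ∀ x₂ : Ext.{w} X S.X₂ 0, ∃ x₁ : Ext X S.X₁ 0, x₁.comp (.mk₀ S.f) (add_zero 0) = x₂) :
    Module.rank K (Ext X S.X₁ 0) = Module.rank K (Ext X S.X₂ 0) := by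
  have := hS.mono_f
  exact (LinearEquiv.ofBijective
    ((Ext.bilinearCompOfLinear K X S.X₁ S.X₂ 0 0 0 rfl).flip (.mk₀ S.f))
    ⟨Ext.postcomp_mk₀_injective_of_mono X S.f, hsurj⟩).rank_eq

lemma mapExactFunctor_mapExactFunctor {E : Type*} [Category* E] [Abelian E] (F : C ⥤ D) (G : D ⥤ E)
    [F.Additive] [PreservesFiniteLimits F] [PreservesFiniteColimits F]
    [G.Additive] [PreservesFiniteLimits G] [PreservesFiniteColimits G]
    [EnoughProjectives C] [HasExt.{w} C] [HasExt.{w} D] [HasExt.{w} E]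
    {X Y : C} {n : ℕ} (x : Ext.{w} X Y n) :
    (x.mapExactFunctor F).mapExactFunctor G = (x.mapExactFunctor (F ⋙ G) : Ext.{w} _ _ n) := by
  induction n generalizing X with
  | zero =>
    obtain ⟨f, rfl⟩ := Ext.homEquiv₀.symm.surjective x
    simp only [Ext.homEquiv₀_symm_apply, Ext.mapExactFunctor_mk₀, Functor.comp_map]
  | succ n ih =>
    let P : ProjectivePresentation X := Classical.arbitrary _
    have hS : (ShortComplex.mk _ _ (kernel.condition P.f)).ShortExact :=
      { exact := ShortComplex.exact_kernel P.f }
    have := P.projective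
    obtain ⟨x, rfl⟩ :=
      Ext.contravariant_sequence_exact₃ hS Y x (Ext.eq_zero_of_projective _) (add_comm 1 n)
    have hδ : (hS.extClass.mapExactFunctor F).mapExactFunctor G =
        (hS.extClass.mapExactFunctor (F ⋙ G) : Ext.{w} _ _ 1) :=
      (congrArg (Ext.mapExactFunctor G) (Ext.mapExactFunctor_extClass F hS)).trans
        ((Ext.mapExactFunctor_extClass G (hS.map_of_exact F)).trans
          (Ext.mapExactFunctor_extClass (F ⋙ G) hS).symm)
    rw [Ext.mapExactFunctor_comp, Ext.mapExactFunctor_comp, Ext.mapExactFunctor_comp, ih x, hδ]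

/-- The map `Ext^n(X, Y) → Ext^n(F X, Y')` which applies the exact functor `F` and then pushes
forward along `ε : F Y ⟶ Y'`. If `F` is a restriction functor and `Y` is coinduced from `Y'`, this
is the map of Shapiro's lemma. -/
noncomputable def shapiroMap (F : C ⥤ D) [F.Additive] [PreservesFiniteLimits F]
    [PreservesFiniteColimits F] [HasExt.{w} C] [HasExt.{w} D] {Y : C} {Y' : D} (ε : F.obj Y ⟶ Y')
    (X : C) (n : ℕ) : Ext.{w} X Y n →+ Ext.{w} (F.obj X) Y' n :=
  ((Ext.mk₀ ε).postcomp (F.obj X) (add_zero n)).comp (F.mapExtAddHom X Y n)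

section Shapiro

variable (F : C ⥤ D) [F.Additive] [PreservesFiniteLimits F] [PreservesFiniteColimits F]
  [HasExt.{w} C] [HasExt.{w} D] {Y : C} {Y' : D} (ε : F.obj Y ⟶ Y')

lemma shapiroMap_apply (X : C) (n : ℕ) (x : Ext.{w} X Y n) :
    (shapiroMap F ε X n x : Ext.{w} _ _ n) = (x.mapExactFunctor F).comp (.mk₀ ε) (add_zero n) :=
  rfl

lemma shapiroMap_comp {X₁ X₂ : C} {a b n : ℕ} (x : Ext.{w} X₁ X₂ a) (y : Ext.{w} X₂ Y b)
    (h : a + b = n) : (shapiroMap F ε X₁ n (x.comp y h) : Ext.{w} _ _ n) =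
      (x.mapExactFunctor F).comp (shapiroMap F ε X₂ b y) h := by
  rw [shapiroMap_apply, Ext.mapExactFunctor_comp, Ext.comp_assoc_of_third_deg_zero,
    shapiroMap_apply]

lemma shapiroMap_zero_bijective {X : C}
    (hε : Function.Bijective fun f : X ⟶ Y ↦ F.map f ≫ ε) :
    Function.Bijective (shapiroMap F ε X 0 : Ext.{w} X Y 0 →+ Ext.{w} (F.obj X) Y' 0) := by
  refine (Equiv.bijective_comp Ext.homEquiv₀.symm _).1 ((Equiv.comp_bijective _ Ext.homEquiv₀).1 ?_)
  convert hε using 1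
  ext f
  rw [Function.comp_apply, Function.comp_apply, ← Equiv.eq_symm_apply, Ext.homEquiv₀_symm_apply,
    Ext.homEquiv₀_symm_apply, shapiroMap_apply, Ext.mapExactFunctor_mk₀, Ext.mk₀_comp_mk₀]

variable [EnoughProjectives C] [F.PreservesProjectiveObjects]

lemma shapiroMap_bijective
    (hε : ∀ X : C, Function.Bijective fun f : X ⟶ Y ↦ F.map f ≫ ε) (X : C) (n : ℕ) :
    Function.Bijective (shapiroMap F ε X n : Ext.{w} X Y n →+ Ext.{w} (F.obj X) Y' n) := by
  induction n generalizing X with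
  | zero => exact shapiroMap_zero_bijective F ε (hε X)
  | succ n ih =>
    let P : ProjectivePresentation X := Classical.arbitrary _
    let S := ShortComplex.mk _ _ (kernel.condition P.f)
    have hS : S.ShortExact := { exact := ShortComplex.exact_kernel P.f }
    have : Projective S.X₂ := P.projective
    have : Projective (S.map F).X₂ := Functor.PreservesProjectiveObjects.projective_obj P.projective
    have hf (x : Ext.{w} S.X₂ Y n) :
        (Ext.mk₀ (F.map S.f)).comp (shapiroMap F ε S.X₂ n x) (zero_add n) =
          shapiroMap F ε S.X₁ n ((Ext.mk₀ S.f).comp x (zero_add n)) := by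
      rw [shapiroMap_comp, Ext.mapExactFunctor_mk₀]
    have hδ (x : Ext.{w} S.X₁ Y n) :
        (hS.map_of_exact F).extClass.comp (shapiroMap F ε S.X₁ n x) (add_comm 1 n) =
          shapiroMap F ε S.X₃ (n + 1) (hS.extClass.comp x (add_comm 1 n)) := by
      rw [shapiroMap_comp, Ext.mapExactFunctor_extClass F hS]
      rfl
    exact AddMonoidHom.bijective_of_surjective_of_bijective_of_right_exact _ _ _ _
      (shapiroMap F ε S.X₂ n) (shapiroMap F ε S.X₁ n) (shapiroMap F ε S.X₃ (n + 1))
      (AddMonoidHom.ext hf) (AddMonoidHom.ext hδ)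
      ((ShortComplex.ab_exact_iff_function_exact _).1
        (Ext.contravariant_sequence_exact₁' hS Y n (n + 1) (add_comm 1 n)))
      ((ShortComplex.ab_exact_iff_function_exact _).1
        (Ext.contravariant_sequence_exact₁' (hS.map_of_exact F) Y' n (n + 1) (add_comm 1 n)))
      (ih _).surjective (ih _)
      (fun x ↦ Ext.contravariant_sequence_exact₃ hS _ x (Ext.eq_zero_of_projective _)
        (add_comm 1 n))
      (fun x ↦ Ext.contravariant_sequence_exact₃ (hS.map_of_exact F) _ x
        (Ext.eq_zero_of_projective _) (add_comm 1 n))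

lemma rank_ext_eq_of_shapiro (K : Type*) [CommRing K] [Linear K C] [Linear K D] [F.Linear K]
    (hε : ∀ X : C, Function.Bijective fun f : X ⟶ Y ↦ F.map f ≫ ε) (X : C) (n : ℕ) :
    Module.rank K (Ext.{w} X Y n) = Module.rank K (Ext.{w} (F.obj X) Y' n) :=
  (LinearEquiv.ofBijective
    ((Ext.bilinearCompOfLinear K (F.obj X) (F.obj Y) Y' n 0 n (add_zero n)).flip (.mk₀ ε) ∘ₗ
      F.mapExtLinearMap K X Y n)
    (shapiroMap_bijective F ε hε X n)).rank_eq

end Shapiro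

lemma exists_comp_mk₀_eq_of_section (F : C ⥤ D) (G : D ⥤ C) [F.Additive] [PreservesFiniteLimits F]
    [PreservesFiniteColimits F] [G.Additive] [PreservesFiniteLimits G] [PreservesFiniteColimits G]
    [EnoughProjectives C] [EnoughProjectives D] [F.PreservesProjectiveObjects]
    [HasExt.{w} C] [HasExt.{w} D] (α : G ⋙ F ≅ 𝟭 D) {X Y' : D} {Y : C} (ε : F.obj Y ⟶ Y')
    (hε : ∀ M : C, Function.Bijective fun f : M ⟶ Y ↦ F.map f ≫ ε)
    (σ : G.obj Y' ⟶ Y) (hσ : F.map σ ≫ ε = α.hom.app Y') {n : ℕ} (x : Ext.{w} (G.obj X) Y n) :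
    ∃ z : Ext.{w} (G.obj X) (G.obj Y') n, z.comp (.mk₀ σ) (add_zero n) = x := by
  have : (G ⋙ F).PreservesProjectiveObjects :=
    ⟨fun hP ↦ Projective.of_iso (α.app _).symm hP⟩
  have hα (M : D) : Function.Bijective fun f : M ⟶ Y' ↦ (G ⋙ F).map f ≫ α.hom.app Y' := by
    simp only [α.hom.naturality]
    exact (α.app M).symm.homFromEquiv.bijective
  obtain ⟨z, hz⟩ := (shapiroMap_bijective (G ⋙ F) (α.hom.app Y') hα X n).surjective
    (shapiroMap F ε (G.obj X) n x)
  refine ⟨z.mapExactFunctor G, (shapiroMap_bijective F ε hε (G.obj X) n).injective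
    (Eq.trans ?_ hz)⟩
  rw [shapiroMap_apply, shapiroMap_apply, Ext.mapExactFunctor_comp, Ext.mapExactFunctor_mk₀,
    Ext.comp_assoc_of_third_deg_zero, Ext.mk₀_comp_mk₀, hσ, mapExactFunctor_mapExactFunctor]

end Homology

section Algebra

/-- The nilCoxeter relations of type `A` for a sequence of elements of a monoid with zero. -/
structure Relations {R : Type*} [MonoidWithZero R] (f : ℕ → R) : Prop where
  sq (i : ℕ) : f i * f i = 0
  braid (i : ℕ) : f i * f (i + 1) * f i = f (i + 1) * f i * f (i + 1)
  comm {i j : ℕ} (h : i + 2 ≤ j) : f i * f j = f j * f i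

/-- The relations defining the parabolic nilCoxeter algebra `N k J`. -/
inductive Rel (J : Finset ℕ) : FreeAlgebra k ℕ → FreeAlgebra k ℕ → Prop
  | out (i : ℕ) (h : i ∉ J) : Rel J (FreeAlgebra.ι k i) 0
  | sq (i : ℕ) : Rel J (FreeAlgebra.ι k i * FreeAlgebra.ι k i) 0
  | braid (i : ℕ) : Rel J (FreeAlgebra.ι k i * FreeAlgebra.ι k (i + 1) * FreeAlgebra.ι k i)
      (FreeAlgebra.ι k (i + 1) * FreeAlgebra.ι k i * FreeAlgebra.ι k (i + 1))
  | comm (i j : ℕ) (h : i + 2 ≤ j) : Rel J (FreeAlgebra.ι k i * FreeAlgebra.ι k j)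
      (FreeAlgebra.ι k j * FreeAlgebra.ι k i)

/-- The nilCoxeter algebra of the parabolic subgroup generated by the simple transpositions
`(i, i + 1)` with `i ∈ J`. There is one generator for each natural number; those outside `J` are
zero, so that index shifts never have to be checked against `J`. -/
def N (J : Finset ℕ) : Type := RingQuot (Rel k J)

noncomputable instance (J : Finset ℕ) : Ring (N k J) := inferInstanceAs (Ring (RingQuot (Rel k J)))

noncomputable instance (J : Finset ℕ) : Algebra k (N k J) :=
  inferInstanceAs (Algebra k (RingQuot (Rel k J)))

/-- The quotient map defining `N k J`. -/
noncomputable def mk (J : Finset ℕ) : FreeAlgebra k ℕ →ₐ[k] N k J :=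
  RingQuot.mkAlgHom k (Rel k J)

/-- The `i`-th generator of `N k J`. -/
noncomputable def y (J : Finset ℕ) (i : ℕ) : N k J :=
  mk k J (FreeAlgebra.ι k i)

variable {k} in
lemma mk_eq_of_rel {J : Finset ℕ} {a b : FreeAlgebra k ℕ} (h : Rel k J a b) :
    mk k J a = mk k J b :=
  RingQuot.mkAlgHom_rel k h

lemma y_eq_zero {J : Finset ℕ} {i : ℕ} (hi : i ∉ J) : y k J i = 0 :=
  (mk_eq_of_rel (Rel.out i hi)).trans (map_zero _)

lemma relations_y (J : Finset ℕ) : Relations (y k J) where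
  sq i := by simpa only [y, map_mul, map_zero] using mk_eq_of_rel (Rel.sq (k := k) (J := J) i)
  braid i := by simpa only [y, map_mul] using mk_eq_of_rel (Rel.braid (k := k) (J := J) i)
  comm h := by simpa only [y, map_mul] using mk_eq_of_rel (Rel.comm (k := k) (J := J) _ _ h)

variable {k} {J : Finset ℕ}

lemma Relations.ite {R : Type*} [MonoidWithZero R] {f : ℕ → R} (hf : Relations f) (P : ℕ → Prop)
    [DecidablePred P] : Relations fun i ↦ if P i then f i else 0 where
  sq i := by split_ifs <;> simp [hf.sq]
  braid i := by split_ifs <;> simp [hf.braid]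
  comm hij := by split_ifs <;> simp [hf.comm hij]

/-- The algebra homomorphism from `N k J` determined by a sequence of elements satisfying the
nilCoxeter relations, of which only those indexed by `J` matter. -/
noncomputable def lift {R : Type*} [Ring R] [Algebra k R] (f : ℕ → R) (hf : Relations f) :
    N k J →ₐ[k] R :=
  RingQuot.liftAlgHom k ⟨FreeAlgebra.lift k fun i ↦ if i ∈ J then f i else 0, by
    rintro _ _ (⟨i, hi⟩ | i | i | ⟨i, j, hij⟩)
    · simp only [FreeAlgebra.lift_ι_apply, hi, if_false, map_zero]
    · simpa only [map_mul, FreeAlgebra.lift_ι_apply, map_zero] using (hf.ite (· ∈ J)).sq i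
    · simpa only [map_mul, FreeAlgebra.lift_ι_apply] using (hf.ite (· ∈ J)).braid i
    · simpa only [map_mul, FreeAlgebra.lift_ι_apply] using (hf.ite (· ∈ J)).comm hij⟩

lemma lift_y {R : Type*} [Ring R] [Algebra k R] {f : ℕ → R} (hf : Relations f) {i : ℕ}
    (hi : i ∈ J) : lift f hf (y k J i) = f i :=
  (RingQuot.liftAlgHom_mkAlgHom_apply _ _ _ _).trans
    ((FreeAlgebra.lift_ι_apply _ _).trans (if_pos hi))

variable (k J) in
lemma adjoin_range_y : Algebra.adjoin k (Set.range (y k J)) = ⊤ := by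
  have hrange : Set.range (y k J) = mk k J '' Set.range (FreeAlgebra.ι k) := Set.range_comp _ _
  rw [hrange, ← AlgHom.map_adjoin, FreeAlgebra.adjoin_range_ι, Algebra.map_top,
    AlgHom.range_eq_top]
  exact RingQuot.mkAlgHom_surjective k _

@[elab_as_elim]
lemma N_induction {P : N k J → Prop} (algebraMap : ∀ c : k, P (algebraMap k _ c))
    (y : ∀ i ∈ J, P (y k J i)) (add : ∀ a b, P a → P b → P (a + b))
    (mul : ∀ a b, P a → P b → P (a * b)) (a : N k J) : P a := by
  have ha : a ∈ Algebra.adjoin k (Set.range (NilCoxeter.y k J)) := by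
    rw [adjoin_range_y]
    exact Algebra.mem_top
  induction ha using Algebra.adjoin_induction with
  | mem x hx =>
    obtain ⟨i, rfl⟩ := hx
    by_cases hi : i ∈ J
    · exact y i hi
    · simpa only [y_eq_zero k hi, map_zero] using algebraMap 0
  | algebraMap c => exact algebraMap c
  | add a b _ _ ha hb => exact add a b ha hb
  | mul a b _ _ ha hb => exact mul a b ha hb

lemma exists_eq_algebraMap (a : N k ∅) : ∃ c, a = algebraMap k _ c := by
  induction a using N_induction with
  | algebraMap c => exact ⟨c, rfl⟩
  | y i hi => exact absurd hi (Finset.notMem_empty i)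
  | add a b ha hb =>
    obtain ⟨⟨c, rfl⟩, ⟨d, rfl⟩⟩ := And.intro ha hb
    exact ⟨c + d, (map_add _ _ _).symm⟩
  | mul a b ha hb =>
    obtain ⟨⟨c, rfl⟩, ⟨d, rfl⟩⟩ := And.intro ha hb
    exact ⟨c * d, (map_mul _ _ _).symm⟩

lemma N_hom_ext {R : Type*} [Ring R] [Algebra k R] {f g : N k J →ₐ[k] R}
    (h : ∀ i ∈ J, f (y k J i) = g (y k J i)) : f = g := by
  ext a
  induction a using N_induction with
  | algebraMap c => simp only [AlgHom.commutes]
  | y i hi => exact h i hi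
  | add a b ha hb => rw [map_add, map_add, ha, hb]
  | mul a b ha hb => rw [map_mul, map_mul, ha, hb]

lemma eq_top_of_mul_y_mem {S : Submodule k (N k J)} (h1 : 1 ∈ S)
    (hS : ∀ s ∈ S, ∀ i ∈ J, s * y k J i ∈ S) : S = ⊤ := by
  have hmul (a : N k J) : ∀ s ∈ S, s * a ∈ S := by
    induction a using N_induction with
    | algebraMap c =>
      intro s hs
      rw [← Algebra.commutes, ← Algebra.smul_def]
      exact S.smul_mem c hs
    | y i hi => exact fun s hs ↦ hS s hs i hi
    | add a b ha hb => exact fun s hs ↦ mul_add s a b ▸ S.add_mem (ha s hs) (hb s hs)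
    | mul a b ha hb => exact fun s hs ↦ mul_assoc s a b ▸ hb _ (ha s hs)
  exact Submodule.eq_top_iff'.2 fun a ↦ one_mul a ▸ hmul a 1 h1

variable (k J)

/-- The augmentation of `N k J`, sending all generators to `0`. -/
noncomputable def aug : N k J →ₐ[k] k :=
  lift 0 ⟨by simp, by simp, by simp⟩

@[simp]
lemma aug_y (i : ℕ) : aug k J (y k J i) = 0 := by
  by_cases hi : i ∈ J
  · exact lift_y _ hi
  · rw [y_eq_zero k hi, map_zero]

/-- The algebra homomorphism `N k J → N k J'` preserving the generators indexed by `J ∩ J'` and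
killing all others. It is an inclusion for `J ⊆ J'` and a retraction of that inclusion for
`J' ⊆ J`. -/
noncomputable def transfer (J' : Finset ℕ) : N k J →ₐ[k] N k J' :=
  lift (y k J') (relations_y k J')

variable {J}

lemma transfer_y (J' : Finset ℕ) {i : ℕ} (hi : i ∈ J) : transfer k J J' (y k J i) = y k J' i :=
  lift_y _ hi

lemma transfer_comp_transfer {J' : Finset ℕ} (h : J' ⊆ J) :
    (transfer k J J').comp (transfer k J' J) = AlgHom.id k _ :=
  N_hom_ext fun i hi ↦ by
    rw [AlgHom.comp_apply, transfer_y k J hi, transfer_y k J' (h hi), AlgHom.id_apply]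

lemma aug_comp_transfer (J J' : Finset ℕ) : (aug k J').comp (transfer k J J') = aug k J :=
  N_hom_ext fun i hi ↦ by rw [AlgHom.comp_apply, transfer_y k J' hi, aug_y, aug_y]

lemma transfer_erase_y {p j : ℕ} (hj : j ≠ p) :
    transfer k (J.erase p) J (y k (J.erase p) j) = y k J j := by
  by_cases h : j ∈ J
  · exact transfer_y k J (mem_erase.2 ⟨hj, h⟩)
  · rw [y_eq_zero k h, y_eq_zero k (fun hj ↦ h (Finset.mem_of_mem_erase hj)), map_zero]

end Algebra

section CosetRepresentatives

variable {R : Type*} [MonoidWithZero R] (f : ℕ → R)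

/-- The descending product `f (a - 1) * f (a - 2) * ⋯ * f t`, which is `1` if `a ≤ t`. -/
def descProd : ℕ → ℕ → R
  | 0, _ => 1
  | a + 1, t => if t ≤ a then f a * descProd a t else 1

lemma descProd_eq_one {a t : ℕ} (h : a ≤ t) : descProd f a t = 1 := by
  cases a with
  | zero => rfl
  | succ a => exact if_neg (by lia)

lemma descProd_succ {a t : ℕ} (h : t ≤ a) : descProd f (a + 1) t = f a * descProd f a t :=
  if_pos h

lemma descProd_mul {a t : ℕ} (h : t < a) : descProd f a (t + 1) * f t = descProd f a t := by
  induction a with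
  | zero => lia
  | succ a ih =>
    obtain rfl | hta := (Nat.lt_succ_iff.1 h).eq_or_lt
    · rw [descProd_eq_one f le_rfl, descProd_succ f le_rfl, descProd_eq_one f le_rfl, one_mul,
        mul_one]
    · rw [descProd_succ f hta, descProd_succ f hta.le, mul_assoc, ih hta]

/-- Replaces the element `i + 1` of `S` by `i`. -/
def slide (i : ℕ) (S : Finset ℕ) : Finset ℕ := insert i (S.erase (i + 1))

lemma mem_slide {i x : ℕ} {S : Finset ℕ} : x ∈ slide i S ↔ x = i ∨ x ≠ i + 1 ∧ x ∈ S := by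
  rw [slide, mem_insert, mem_erase]

lemma slide_comm {i j : ℕ} (hij : i + 2 ≤ j) (S : Finset ℕ) :
    slide i (slide j S) = slide j (slide i S) := by
  ext x
  simp only [mem_slide]
  lia

lemma slide_erase {i M : ℕ} (him : i < M) (S : Finset ℕ) :
    slide i (S.erase (M + 1)) = (slide i S).erase (M + 1) := by
  ext x
  simp only [mem_slide, mem_erase]
  lia

/-- The product of the `descProd f (p + 1 + c) t` over the `t ∈ S` with `t < M` in increasing order,
where `c` is the number of elements of `S` below `t`. For `S` a subset of `{0, …, m + 1}` with
`m + 1 - p` elements and `M = m + 2`, this represents the coset of permutations sending `S` to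
`{p + 1, …, m + 1}`. -/
def cosetRep (p : ℕ) (S : Finset ℕ) : ℕ → R
  | 0 => 1
  | M + 1 =>
    if M ∈ S then cosetRep p S M * descProd f (p + 1 + Nat.count (· ∈ S) M) M else cosetRep p S M

variable {f} {p : ℕ} {S : Finset ℕ}

lemma cosetRep_succ_of_mem {M : ℕ} (hM : M ∈ S) :
    cosetRep f p S (M + 1) =
      cosetRep f p S M * descProd f (p + 1 + Nat.count (· ∈ S) M) M :=
  if_pos hM

lemma cosetRep_succ_of_notMem {M : ℕ} (hM : M ∉ S) :
    cosetRep f p S (M + 1) = cosetRep f p S M :=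
  if_neg hM

lemma count_Icc_add {p m d : ℕ} (hd : p + d ≤ m) :
    Nat.count (· ∈ Icc (p + 1) m) (p + 1 + d) = d := by
  rw [Nat.count_add, Nat.count_iff_forall_not.2 fun x hx ↦ by rw [mem_Icc]; lia,
    Nat.count_iff_forall.2 fun x hx ↦ by rw [mem_Icc]; lia, zero_add]

lemma count_mem_congr {S T : Finset ℕ} {M : ℕ} (h : ∀ x < M, x ∈ S ↔ x ∈ T) :
    Nat.count (· ∈ S) M = Nat.count (· ∈ T) M :=
  le_antisymm (Nat.count_mono_left fun x hx ↦ (h x hx).1)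
    (Nat.count_mono_left fun x hx ↦ (h x hx).2)

lemma cosetRep_congr {T : Finset ℕ} {M : ℕ} (h : ∀ x < M, x ∈ S ↔ x ∈ T) :
    cosetRep f p S M = cosetRep f p T M := by
  induction M with
  | zero => rfl
  | succ M ih =>
    have h' (x : ℕ) (hx : x < M) : x ∈ S ↔ x ∈ T := h x (by lia)
    simp only [cosetRep, h M M.lt_succ_self, ih h', count_mem_congr h']

lemma cosetRep_Icc (p m M : ℕ) (hM : M ≤ m + 1) : cosetRep f p (Icc (p + 1) m) M = 1 := by
  induction M with
  | zero => rfl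
  | succ M ih =>
    by_cases h : M ∈ Icc (p + 1) m
    · obtain ⟨d, rfl⟩ := Nat.exists_eq_add_of_le (mem_Icc.1 h).1
      rw [cosetRep_succ_of_mem h, ih (by lia), count_Icc_add (by lia),
        descProd_eq_one f le_rfl, one_mul]
    · rw [cosetRep_succ_of_notMem h, ih (by lia)]

lemma mem_slide_iff_of_ne {i x : ℕ} (hi : x ≠ i) (hi' : x ≠ i + 1) : x ∈ slide i S ↔ x ∈ S := by
  simp only [slide, mem_insert, mem_erase]
  tauto

lemma count_slide {i M : ℕ} (hM : i + 2 ≤ M) (h₀ : i ∉ S) (h₁ : i + 1 ∈ S) :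
    Nat.count (· ∈ slide i S) M = Nat.count (· ∈ S) M := by
  induction M, hM using Nat.le_induction with
  | base =>
    simp only [Nat.count_succ, h₀, h₁, show i ∈ slide i S by simp [slide],
      show i + 1 ∉ slide i S by simp [slide], if_true, if_false, add_zero]
    rw [count_mem_congr fun x hx ↦ mem_slide_iff_of_ne (by lia) (by lia)]
  | succ M hiM ih =>
    simp only [Nat.count_succ, ih, mem_slide_iff_of_ne (x := M) (i := i) (by lia) (by lia)]

variable (hf : Relations f)
include hf

lemma Relations.descProd_commute {a t i : ℕ} (h : i + 1 < t ∨ a < i) :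
    Commute (descProd f a t) (f i) := by
  induction a with
  | zero => exact Commute.one_left _
  | succ a ih =>
    rw [descProd]
    split_ifs with hta
    · refine Commute.mul_left ?_ (ih (by lia))
      obtain h | h := h
      · exact (hf.comm (by lia)).symm
      · exact hf.comm (by lia)
    · exact Commute.one_left _

lemma Relations.descProd_mul_self {a t : ℕ} (h : t < a) : descProd f a t * f t = 0 := by
  rw [← descProd_mul f h, mul_assoc, hf.sq, mul_zero]

lemma Relations.descProd_mul_succ {a t i : ℕ} (hti : t ≤ i) (hia : i + 1 < a) :
    descProd f a t * f (i + 1) = f i * descProd f a t := by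
  induction a with
  | zero => lia
  | succ a ih =>
    rw [descProd_succ f (by lia)]
    obtain rfl | hia := (Nat.lt_succ_iff.1 hia).eq_or_lt
    · rw [descProd_succ f hti]
      calc f (i + 1) * (f i * descProd f i t) * f (i + 1)
          = f (i + 1) * f i * (descProd f i t * f (i + 1)) := by simp only [mul_assoc]
        _ = f (i + 1) * f i * f (i + 1) * descProd f i t := by
          rw [(hf.descProd_commute (.inr (by lia))).eq, mul_assoc (f (i + 1) * f i)]
        _ = f i * (f (i + 1) * (f i * descProd f i t)) := by
          rw [← hf.braid]
          simp only [mul_assoc]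
    · rw [mul_assoc, ih hia, ← mul_assoc, ← hf.comm hia, mul_assoc]

lemma Relations.descProd_mul_descProd {a b t : ℕ} (htb : t ≤ b) (hba : b ≤ a) :
    descProd f (a + 1) t * descProd f (b + 1) (t + 1) = descProd f b t * descProd f (a + 1) t := by
  induction b, htb using Nat.le_induction with
  | base => rw [descProd_eq_one f le_rfl, descProd_eq_one f le_rfl, mul_one, one_mul]
  | succ b htb ih =>
    rw [descProd_succ f (a := b + 1) (by lia), descProd_succ f htb, ← mul_assoc,
      hf.descProd_mul_succ htb (by lia), mul_assoc, ih (by lia), mul_assoc]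

lemma Relations.cosetRep_commute {M j : ℕ} (hj : p + Nat.count (· ∈ S) M < j) :
    Commute (cosetRep f p S M) (f j) := by
  induction M with
  | zero => exact Commute.one_left _
  | succ M ih =>
    by_cases hM : M ∈ S
    · rw [Nat.count_succ, if_pos hM] at hj
      rw [cosetRep_succ_of_mem hM]
      exact (ih (by lia)).mul_left (hf.descProd_commute (.inr (by lia)))
    · rw [Nat.count_succ, if_neg hM] at hj
      rw [cosetRep_succ_of_notMem hM]
      exact ih hj

lemma Relations.exists_lt_cosetRep_mul {M i : ℕ} (hMi : M ≤ i)
    (hi : i < p + Nat.count (· ∈ S) M) :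
    ∃ j < p, cosetRep f p S M * f i = f j * cosetRep f p S M := by
  induction M generalizing i with
  | zero => exact ⟨i, by simpa using hi, by rw [cosetRep, one_mul, mul_one]⟩
  | succ M ih =>
    by_cases hM : M ∈ S
    · obtain ⟨i, rfl⟩ := Nat.exists_eq_add_one.2 (Nat.zero_lt_of_lt hMi)
      rw [Nat.count_succ, if_pos hM] at hi
      obtain ⟨j, hj, h⟩ := ih (i := i) (by lia) (by lia)
      refine ⟨j, hj, ?_⟩
      rw [cosetRep_succ_of_mem hM, mul_assoc, hf.descProd_mul_succ (by lia) (by lia),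
        ← mul_assoc, h, mul_assoc]
    · rw [Nat.count_succ, if_neg hM] at hi
      rw [cosetRep_succ_of_notMem hM]
      exact ih (by lia) hi

lemma Relations.cosetRep_mul_of_notMem_of_mem {i M : ℕ} (hM : i + 2 ≤ M)
    (hi : i ≤ p + Nat.count (· ∈ S) i) (h₀ : i ∉ S) (h₁ : i + 1 ∈ S) :
    cosetRep f p S M * f i = cosetRep f p (slide i S) M := by
  induction M, hM using Nat.le_induction with
  | base =>
    have hlt (x : ℕ) (hx : x < i) : x ∈ slide i S ↔ x ∈ S :=
      mem_slide_iff_of_ne (by lia) (by lia)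
    rw [cosetRep_succ_of_mem h₁, cosetRep_succ_of_notMem h₀,
      cosetRep_succ_of_notMem (by simp [slide]), cosetRep_succ_of_mem (by simp [slide]),
      cosetRep_congr hlt, count_mem_congr hlt, mul_assoc, Nat.count_succ, if_neg h₀,
      add_zero, descProd_mul f (by lia)]
  | succ M hiM ih =>
    have hM := mem_slide_iff_of_ne (S := S) (x := M) (i := i) (by lia) (by lia)
    by_cases h : M ∈ S
    · rw [cosetRep_succ_of_mem h, cosetRep_succ_of_mem (hM.2 h), ← ih, count_slide hiM h₀ h₁,
        mul_assoc, (hf.descProd_commute (.inl (by lia))).eq, mul_assoc]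
    · rw [cosetRep_succ_of_notMem h, cosetRep_succ_of_notMem (hM.not.2 h), ih]

lemma Relations.exists_commute_cosetRep_eq_mul {i M : ℕ} (hM : i + 2 ≤ M) :
    ∃ b, Commute b (f i) ∧ cosetRep f p S M = cosetRep f p S (i + 2) * b := by
  induction M, hM using Nat.le_induction with
  | base => exact ⟨1, Commute.one_left _, (mul_one _).symm⟩
  | succ M hiM ih =>
    obtain ⟨b, hb, h⟩ := ih
    by_cases hM : M ∈ S
    · exact ⟨b * descProd f (p + 1 + Nat.count (· ∈ S) M) M,
        hb.mul_left (hf.descProd_commute (.inl (by lia))),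
        by rw [cosetRep_succ_of_mem hM, h, mul_assoc]⟩
    · exact ⟨b, hb, by rw [cosetRep_succ_of_notMem hM, h]⟩

lemma Relations.cosetRep_mul_of_mem_of_notMem {i M : ℕ} (hM : i + 2 ≤ M)
    (hi : i ≤ p + Nat.count (· ∈ S) i) (h₀ : i ∈ S) (h₁ : i + 1 ∉ S) :
    cosetRep f p S M * f i = 0 := by
  obtain ⟨b, hb, h⟩ := hf.exists_commute_cosetRep_eq_mul (p := p) (S := S) hM
  rw [h, mul_assoc, hb.eq, ← mul_assoc, cosetRep_succ_of_notMem h₁, cosetRep_succ_of_mem h₀,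
    mul_assoc (cosetRep f p S i), hf.descProd_mul_self (by lia), mul_zero, zero_mul]

lemma Relations.exists_cosetRep_mul_of_mem_iff_mem {i M : ℕ} (hM : i + 2 ≤ M)
    (hi : i + 1 ≤ p + Nat.count (· ∈ S) (i + 2)) (hS : i ∈ S ↔ i + 1 ∈ S) :
    ∃ j ≠ p, cosetRep f p S M * f i = f j * cosetRep f p S M := by
  suffices ∃ j ≠ p, cosetRep f p S (i + 2) * f i = f j * cosetRep f p S (i + 2) by
    obtain ⟨j, hj, hz⟩ := this
    obtain ⟨b, hb, h⟩ := hf.exists_commute_cosetRep_eq_mul (p := p) (S := S) hM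
    exact ⟨j, hj, by rw [h, mul_assoc, hb.eq, ← mul_assoc, hz, mul_assoc]⟩
  by_cases h₀ : i ∈ S
  · have h₁ := hS.1 h₀
    rw [Nat.count_succ, Nat.count_succ, if_pos h₀, if_pos h₁] at hi
    set c := Nat.count (· ∈ S) i
    refine ⟨p + 1 + c, by lia, ?_⟩
    have hcomm : Commute (cosetRep f p S i) (f (p + 1 + c)) := hf.cosetRep_commute (by lia)
    rw [cosetRep_succ_of_mem h₁, cosetRep_succ_of_mem h₀, Nat.count_succ, if_pos h₀]
    calc cosetRep f p S i * descProd f (p + 1 + c) i * descProd f (p + 1 + c + 1) (i + 1) * f i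
        = cosetRep f p S i *
            (descProd f (p + 1 + c) i * (descProd f (p + 1 + c + 1) (i + 1) * f i)) := by
          simp only [mul_assoc]
      _ = cosetRep f p S i * f (p + 1 + c) *
            (descProd f (p + 1 + c) i * descProd f (p + 1 + c + 1) (i + 1)) := by
          rw [descProd_mul f (by lia), ← hf.descProd_mul_descProd (by lia) le_rfl,
            descProd_succ f (t := i) (by lia)]
          simp only [mul_assoc]
      _ = _ := by
          rw [hcomm.eq]
          simp only [mul_assoc]
          rfl
  · have h₁ := hS.not.1 h₀
    rw [Nat.count_succ, Nat.count_succ, if_neg h₀, if_neg h₁] at hi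
    obtain ⟨j, hj, h⟩ := hf.exists_lt_cosetRep_mul (S := S) le_rfl hi
    exact ⟨j, hj.ne, by rw [cosetRep_succ_of_notMem h₁, cosetRep_succ_of_notMem h₀, h]⟩

end CosetRepresentatives

section Cosets

/-- `[l, m]` is the topmost of the maximal intervals contained in `J`. -/
structure IsTopBlock (J : Finset ℕ) (l m : ℕ) : Prop where
  le : l ≤ m
  Icc_subset : Icc l m ⊆ J
  mem_Icc_or_lt {j : ℕ} (hj : j ∈ J) : j ∈ Icc l m ∨ j + 1 < l

lemma IsTopBlock.le_top {J : Finset ℕ} {l m j : ℕ} (hJ : IsTopBlock J l m) (hj : j ∈ J) :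
    j ≤ m := by
  obtain h | h := hJ.mem_Icc_or_lt hj
  · exact (mem_Icc.1 h).2
  · exact (Nat.lt_of_succ_lt h).le.trans hJ.le

lemma exists_isTopBlock {J : Finset ℕ} (hJ : J.Nonempty) : ∃ l m, IsTopBlock J l m := by
  have hmax : J.max' hJ ∈ J := J.max'_mem hJ
  have hex : ∃ l, Icc l (J.max' hJ) ⊆ J :=
    ⟨J.max' hJ, by simpa only [Finset.Icc_self, Finset.singleton_subset_iff] using hmax⟩
  refine ⟨Nat.find hex, J.max' hJ, ?_, Nat.find_spec hex, fun {j} hj ↦ ?_⟩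
  · exact Nat.find_min' hex
      (by simpa only [Finset.Icc_self, Finset.singleton_subset_iff] using hmax)
  · by_contra! hcon
    have hjmax := J.le_max' j hj
    have hjl : j < Nat.find hex := by
      by_contra! h
      exact hcon.1 (mem_Icc.2 ⟨h, hjmax⟩)
    refine Nat.find_min hex hjl fun x hx ↦ ?_
    obtain rfl | hjx := (mem_Icc.1 hx).1.eq_or_lt
    · exact hj
    · exact Nat.find_spec hex (mem_Icc.2 ⟨by lia, (mem_Icc.1 hx).2⟩)

lemma Icc_mem_powersetCard {l a r M : ℕ} (ha : l ≤ a) (hr : a + r = M + 1) :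
    Icc a M ∈ powersetCard r (Icc l M) :=
  mem_powersetCard.2 ⟨Finset.Icc_subset_Icc_left ha, by rw [Nat.card_Icc]; lia⟩

lemma insert_erase_mem_powersetCard {α : Type*} [DecidableEq α] {A S : Finset α} {r : ℕ} {a b : α}
    (hS : S ∈ powersetCard r A) (ha : a ∈ S) (hb : b ∉ S) (hbA : b ∈ A) :
    insert b (S.erase a) ∈ powersetCard r A := by
  obtain ⟨hsub, hcard⟩ := mem_powersetCard.1 hS
  refine mem_powersetCard.2
    ⟨Finset.insert_subset hbA ((Finset.erase_subset _ _).trans hsub), ?_⟩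
  rw [Finset.card_insert_of_notMem (fun h ↦ hb (Finset.mem_of_mem_erase h)),
    Finset.card_erase_add_one ha, hcard]

lemma slide_mem_powersetCard {l M r i : ℕ} {S : Finset ℕ}
    (hS : S ∈ powersetCard r (Icc l M)) (hi : l ≤ i) (h₀ : i ∉ S) (h₁ : i + 1 ∈ S) :
    slide i S ∈ powersetCard r (Icc l M) := by
  have hiM := (mem_Icc.1 ((mem_powersetCard.1 hS).1 h₁)).2
  exact insert_erase_mem_powersetCard hS h₁ h₀ (mem_Icc.2 ⟨hi, by lia⟩)

lemma exists_mem_succ_notMem {M x : ℕ} {S : Finset ℕ} (hS : S.card + x ≤ M) (hx : x ∈ S) :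
    ∃ i < M, i ∈ S ∧ i + 1 ∉ S := by
  by_contra! h
  have hsub : Icc x M ⊆ S := fun t ht ↦ by
    obtain ⟨hxt, htM⟩ := mem_Icc.1 ht
    induction t, hxt using Nat.le_induction with
    | base => exact hx
    | succ t hxt ih => exact h t (by lia) (ih (mem_Icc.2 ⟨hxt, by lia⟩) (by lia))
  have := Finset.card_le_card hsub
  rw [Nat.card_Icc] at this
  lia

@[elab_as_elim]
lemma slide_induction {l M p r : ℕ} (hr : p + r = M) {P : Finset ℕ → Prop}
    (base : P (Icc (p + 1) M))
    (step : ∀ S ∈ powersetCard r (Icc l M), ∀ i, l ≤ i → i < M → i ∉ S →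
      i + 1 ∈ S → P S → P (slide i S))
    (S : Finset ℕ) (hS : S ∈ powersetCard r (Icc l M)) : P S := by
  obtain ⟨hsub, hcard⟩ := mem_powersetCard.1 hS
  by_cases hS₀ : S ⊆ Icc (p + 1) M
  · rwa [Finset.eq_of_subset_of_card_le hS₀ (by rw [Nat.card_Icc]; lia)]
  · obtain ⟨x, hx, hx'⟩ := Finset.not_subset.1 hS₀
    have hxM := mem_Icc.1 (hsub hx)
    rw [mem_Icc] at hx'
    obtain ⟨i, hiM, h₀, h₁⟩ := exists_mem_succ_notMem (M := M) (by lia) hx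
    have hil := (mem_Icc.1 (hsub h₀)).1
    let T := insert (i + 1) (S.erase i)
    have hT : T ∈ powersetCard r (Icc l M) :=
      insert_erase_mem_powersetCard hS h₀ h₁ (mem_Icc.2 ⟨by lia, hiM⟩)
    have hTS : slide i T = S := by
      ext t
      simp only [slide, T, mem_insert, mem_erase]
      grind
    have : ∑ t ∈ T, (M - t) < ∑ t ∈ S, (M - t) := by
      rw [Finset.sum_insert (by simp [h₁]), ← Finset.add_sum_erase S _ h₀]
      lia
    exact hTS ▸ step T hT i hil hiM (by simp [T]) (by simp [T]) (slide_induction hr base step T hT)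
termination_by ∑ t ∈ S, (M - t)

lemma add_card_le_count_add {S : Finset ℕ} {t M : ℕ} (hS : S ⊆ Finset.Iio M) (ht : t ≤ M) :
    t + S.card ≤ Nat.count (· ∈ S) t + M := by
  obtain ⟨d, rfl⟩ := Nat.exists_eq_add_of_le ht
  have hcard : S.card = Nat.count (· ∈ S) (t + d) := by
    rw [Nat.count_eq_card_filter_range]
    congr 1
    ext x
    have := @hS x
    grind
  have := Nat.count_le (p := fun x ↦ t + x ∈ S) (n := d)
  rw [hcard, Nat.count_add]
  lia

variable (J : Finset ℕ)

/-- The coset representative in `N k J` attached to a subset `S` of `[l, m + 1]` with `m + 1 - p`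
elements, where `[l, m]` is the topmost block of `J`. -/
noncomputable def blockRep (m p : ℕ) (S : Finset ℕ) : N k J := cosetRep (y k J) p S (m + 2)

variable {k J} {l m p r i : ℕ} {S : Finset ℕ}

lemma blockRep_Icc : blockRep k J m p (Icc (p + 1) (m + 1)) = 1 :=
  cosetRep_Icc p (m + 1) (m + 2) le_rfl

lemma le_add_count (hr : p + r = m + 1) (hS : S ∈ powersetCard r (Icc l (m + 1)))
    (him : i ≤ m) : i + 1 ≤ p + Nat.count (· ∈ S) (i + 2) := by
  obtain ⟨hsub, hcard⟩ := mem_powersetCard.1 hS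
  have := add_card_le_count_add (t := i + 2) (M := m + 2)
    (hsub.trans fun x hx ↦ Finset.mem_Iio.2 (Nat.lt_succ_of_le (mem_Icc.1 hx).2)) (by lia)
  lia

lemma blockRep_mul_y_of_notMem_of_mem (hr : p + r = m + 1)
    (hS : S ∈ powersetCard r (Icc l (m + 1))) (him : i ≤ m) (h₀ : i ∉ S)
    (h₁ : i + 1 ∈ S) : blockRep k J m p S * y k J i = blockRep k J m p (slide i S) := by
  have hi := le_add_count hr hS him
  rw [Nat.count_succ, Nat.count_succ, if_neg h₀, if_pos h₁] at hi
  exact (relations_y k J).cosetRep_mul_of_notMem_of_mem (by lia) (by lia) h₀ h₁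

lemma blockRep_mul_y_of_mem_of_notMem (hr : p + r = m + 1)
    (hS : S ∈ powersetCard r (Icc l (m + 1))) (him : i ≤ m) (h₀ : i ∈ S)
    (h₁ : i + 1 ∉ S) : blockRep k J m p S * y k J i = 0 := by
  have hi := le_add_count hr hS him
  rw [Nat.count_succ, Nat.count_succ, if_pos h₀, if_neg h₁] at hi
  exact (relations_y k J).cosetRep_mul_of_mem_of_notMem (by lia) (by lia) h₀ h₁

lemma exists_blockRep_mul_y_of_mem_iff_mem (hr : p + r = m + 1)
    (hS : S ∈ powersetCard r (Icc l (m + 1))) (him : i ≤ m)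
    (h : i ∈ S ↔ i + 1 ∈ S) :
    ∃ j ≠ p, blockRep k J m p S * y k J i = y k J j * blockRep k J m p S :=
  (relations_y k J).exists_cosetRep_mul_of_mem_iff_mem (by lia) (le_add_count hr hS him) h

lemma IsTopBlock.le_of_slide (hJ : IsTopBlock J l m) (hi : i ∈ J)
    (hS : S ∈ powersetCard r (Icc l (m + 1))) (h₁ : i + 1 ∈ S) : l ≤ i := by
  have := (mem_Icc.1 ((mem_powersetCard.1 hS).1 h₁)).1
  obtain h | h := hJ.mem_Icc_or_lt hi
  · exact (mem_Icc.1 h).1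
  · lia

lemma exists_eq_sum_transfer_mul_blockRep (hJ : IsTopBlock J l m) (hlp : l ≤ p)
    (hr : p + r = m + 1) (a : N k J) :
    ∃ b : Finset ℕ → N k (J.erase p),
      a = ∑ S ∈ powersetCard r (Icc l (m + 1)),
        transfer k (J.erase p) J (b S) * blockRep k J m p S := by
  let Φ : (Finset ℕ → N k (J.erase p)) →ₗ[k] N k J :=
    ∑ S ∈ powersetCard r (Icc l (m + 1)),
      LinearMap.mulRight k (blockRep k J m p S) ∘ₗ (transfer k (J.erase p) J).toLinearMap ∘ₗ
        LinearMap.proj S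
  have hΦ (b : N k (J.erase p)) {S : Finset ℕ}
      (hS : S ∈ powersetCard r (Icc l (m + 1))) :
      transfer k (J.erase p) J b * blockRep k J m p S ∈ LinearMap.range Φ := by
    refine ⟨Pi.single S b, ?_⟩
    simp only [Φ, LinearMap.sum_apply, LinearMap.comp_apply, LinearMap.proj_apply]
    rw [Finset.sum_eq_single_of_mem S hS fun T _ hT ↦ by
      rw [Pi.single_eq_of_ne hT, map_zero, map_zero], Pi.single_eq_same]
    rfl
  have htop : LinearMap.range Φ = ⊤ := by
    refine eq_top_of_mul_y_mem ?_ ?_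
    · simpa only [map_one, one_mul, blockRep_Icc] using hΦ 1
        (Icc_mem_powersetCard (a := p + 1) (M := m + 1) (by lia) (by lia))
    · rintro _ ⟨b, rfl⟩ i hi
      simp only [Φ, LinearMap.sum_apply, Finset.sum_mul]
      refine Submodule.sum_mem _ fun S hS ↦ ?_
      change transfer k (J.erase p) J (b S) * blockRep k J m p S * y k J i ∈ LinearMap.range Φ
      rw [mul_assoc]
      by_cases h : i ∈ S ↔ i + 1 ∈ S
      · obtain ⟨j, hj, h⟩ := exists_blockRep_mul_y_of_mem_iff_mem (k := k) (J := J) hr hS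
          (hJ.le_top hi) h
        rw [h, ← transfer_erase_y k hj, ← mul_assoc, ← map_mul]
        exact hΦ _ hS
      · by_cases h₀ : i ∈ S
        · rw [blockRep_mul_y_of_mem_of_notMem hr hS (hJ.le_top hi) h₀ (by tauto), mul_zero]
          exact Submodule.zero_mem _
        · have h₁ : i + 1 ∈ S := by tauto
          rw [blockRep_mul_y_of_notMem_of_mem hr hS (hJ.le_top hi) h₀ h₁]
          exact hΦ _ (slide_mem_powersetCard hS (hJ.le_of_slide hi hS h₁) h₀ h₁)
  obtain ⟨b, hb⟩ := LinearMap.mem_range.1 (htop ▸ Submodule.mem_top : a ∈ LinearMap.range Φ)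
  exact ⟨b, by rw [← hb]; simp [Φ]⟩

end Cosets

section Freeness

open Equiv

universe u v w

/-- The operator on functions on permutations which evaluates at `w * swap i (i + 1)` where this is
longer than `w`. -/
def permOp (i : ℕ) : Module.End k (Perm ℕ → k) where
  toFun φ w := if w i < w (i + 1) then φ (w * swap i (i + 1)) else 0
  map_add' φ ψ := by
    ext w
    simp only [Pi.add_apply]
    split_ifs <;> simp
  map_smul' c φ := by
    ext w
    simp

lemma permOp_apply (i : ℕ) (φ : Perm ℕ → k) (w : Perm ℕ) :
    permOp k i φ w = if w i < w (i + 1) then φ (w * swap i (i + 1)) else 0 := rfl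

lemma relations_permOp : Relations (permOp k) where
  sq i := by
    ext φ w
    simp only [Module.End.mul_apply, permOp_apply, Perm.mul_apply, swap_apply_left,
      swap_apply_right, LinearMap.zero_apply, Pi.zero_apply]
    grind
  braid i := by
    ext φ w
    have h₁ : swap i (i + 1) (i + 1 + 1) = i + 1 + 1 := swap_apply_of_ne_of_ne (by lia) (by lia)
    have h₂ : swap (i + 1) (i + 1 + 1) i = i := swap_apply_of_ne_of_ne (by lia) (by lia)
    have hbraid : swap i (i + 1) * (swap (i + 1) (i + 1 + 1) * swap i (i + 1)) =
        swap (i + 1) (i + 1 + 1) * (swap i (i + 1) * swap (i + 1) (i + 1 + 1)) := by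
      ext x
      simp only [Perm.mul_apply, swap_apply_def]
      grind
    simp only [Module.End.mul_apply, permOp_apply, Perm.mul_apply, swap_apply_left,
      swap_apply_right, h₁, h₂, mul_assoc, hbraid]
    grind
  comm {i j} hij := by
    ext φ w
    have hcomm : swap i (i + 1) * swap j (j + 1) = swap j (j + 1) * swap i (i + 1) := by
      ext x
      simp only [Perm.mul_apply, swap_apply_def]
      grind
    have h (x : ℕ) (h₁ : x ≠ i) (h₂ : x ≠ i + 1) : swap i (i + 1) x = x :=
      swap_apply_of_ne_of_ne h₁ h₂
    have h' (x : ℕ) (h₁ : x ≠ j) (h₂ : x ≠ j + 1) : swap j (j + 1) x = x :=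
      swap_apply_of_ne_of_ne h₁ h₂
    simp only [Module.End.mul_apply, permOp_apply, Perm.mul_apply, mul_assoc, hcomm,
      h j (by lia) (by lia), h (j + 1) (by lia) (by lia), h' i (by lia) (by lia),
      h' (i + 1) (by lia) (by lia)]
    grind

variable (J : Finset ℕ)

/-- The representation of `N k J` on functions on permutations. -/
noncomputable def permRep : N k J →ₐ[k] Module.End k (Perm ℕ → k) :=
  lift (permOp k) (relations_permOp k)

variable {J}

lemma permRep_y {i : ℕ} (hi : i ∈ J) : permRep k J (y k J i) = permOp k i := lift_y _ hi

lemma permRep_transfer {J' : Finset ℕ} (h : J' ⊆ J) (a : N k J') :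
    permRep k J (transfer k J' J a) = permRep k J' a := by
  suffices (permRep k J).comp (transfer k J' J) = permRep k J' from DFunLike.congr_fun this a
  exact N_hom_ext fun i hi ↦ by
    rw [AlgHom.comp_apply, transfer_y k J hi, permRep_y k hi, permRep_y k (h hi)]

/-- The subgroup of permutations preserving `{0, …, p}`. -/
def splitSubgroup (p : ℕ) : Subgroup (Perm ℕ) where
  carrier := {w | ∀ x, p < w x ↔ p < x}
  one_mem' := by simp
  mul_mem' := fun hv hw x ↦ (hv _).trans (hw x)
  inv_mem' := fun {w} hw x ↦ by
    rw [← hw, ← Perm.mul_apply, mul_inv_cancel, Perm.one_apply]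

variable {k} {l m p r : ℕ} {S : Finset ℕ}

lemma mem_splitSubgroup {w : Perm ℕ} : w ∈ splitSubgroup p ↔ ∀ x, p < w x ↔ p < x := Iff.rfl

lemma swap_mem_splitSubgroup {i : ℕ} (hi : i ≠ p) : swap i (i + 1) ∈ splitSubgroup p := fun x ↦ by
  rw [swap_apply_def]
  grind

lemma permRep_eqOn_splitSubgroup (b : N k (J.erase p)) {φ ψ : Perm ℕ → k}
    (h : Set.EqOn φ ψ (splitSubgroup p)) :
    Set.EqOn (permRep k (J.erase p) b φ) (permRep k (J.erase p) b ψ) (splitSubgroup p) := by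
  induction b using N_induction generalizing φ ψ with
  | algebraMap c =>
    intro w hw
    simp only [AlgHom.commutes, Module.algebraMap_end_apply, Pi.smul_apply, h hw]
  | y i hi =>
    intro w hw
    rw [permRep_y k hi, permOp_apply, permOp_apply,
      h (mul_mem hw (swap_mem_splitSubgroup (Finset.ne_of_mem_erase hi)))]
  | add a b ha hb =>
    intro w hw
    simp only [map_add, LinearMap.add_apply, Pi.add_apply, ha h hw, hb h hw]
  | mul a b ha hb =>
    rw [map_mul]
    exact ha (hb h)

lemma exists_perm_permRep_blockRep (hJ : Icc l m ⊆ J) (hr : p + r = m + 1)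
    (hS : S ∈ powersetCard r (Icc l (m + 1))) :
    ∃ π : Perm ℕ, (∀ x, p < π x ↔ x ∈ S ∨ m + 1 < x) ∧
      ∀ φ, ∀ w ∈ splitSubgroup p, permRep k J (blockRep k J m p S) φ w = φ (w * π) := by
  refine slide_induction hr ⟨1, fun x ↦ ?_, fun φ w _ ↦ ?_⟩ ?_ S hS
  · rw [Perm.one_apply, mem_Icc]
    lia
  · rw [blockRep_Icc, map_one, Module.End.one_apply, mul_one]
  · rintro S hS i hli him h₀ h₁ ⟨π, hπ, hz⟩
    have hi : i ∈ J := hJ (mem_Icc.2 ⟨hli, by lia⟩)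
    refine ⟨π * swap i (i + 1), fun x ↦ ?_, fun φ w hw ↦ ?_⟩
    · rw [Perm.mul_apply, hπ, swap_apply_def, slide, mem_insert, mem_erase]
      grind
    · have hlt : w (π i) < w (π (i + 1)) := by
        have h := (mem_splitSubgroup.1 hw (π i)).not.2 ((hπ i).not.2 (by grind))
        have h' := (mem_splitSubgroup.1 hw (π (i + 1))).2 ((hπ (i + 1)).2 (.inl h₁))
        lia
      rw [← blockRep_mul_y_of_notMem_of_mem hr hS (by lia) h₀ h₁, map_mul, Module.End.mul_apply,
        hz _ w hw, permRep_y k hi, permOp_apply, Perm.mul_apply, Perm.mul_apply, if_pos hlt,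
        mul_assoc]

lemma permRep_coefficient_eq_zero (hJ : Icc l m ⊆ J) (hr : p + r = m + 1)
    {b : Finset ℕ → N k (J.erase p)}
    (hb : ∀ φ, permRep k J (∑ S ∈ powersetCard r (Icc l (m + 1)),
      transfer k (J.erase p) J (b S) * blockRep k J m p S) φ 1 = 0)
    (hS : S ∈ powersetCard r (Icc l (m + 1))) (ψ : Perm ℕ → k) :
    permRep k (J.erase p) (b S) ψ 1 = 0 := by
  classical
  choose! π hπ hz using fun T (hT : T ∈ powersetCard r (Icc l (m + 1))) ↦
    exists_perm_permRep_blockRep (k := k) hJ hr hT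
  -- `ψ` moved to the right coset of `π S`, so that only the `S`-th summand sees it
  let φ (u : Perm ℕ) : k := if u * (π S)⁻¹ ∈ splitSubgroup p then ψ (u * (π S)⁻¹) else 0
  have hφ {T : Finset ℕ} (hT : T ∈ powersetCard r (Icc l (m + 1))) :
      Set.EqOn (permRep k J (blockRep k J m p T) φ) (if T = S then ψ else 0) (splitSubgroup p) := by
    intro w hw
    rw [hz T hT φ w hw]
    by_cases hTS : T = S
    · subst hTS
      rw [if_pos rfl]
      simp only [φ, mul_inv_cancel_right, if_pos (show w ∈ splitSubgroup p from hw)]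
    · rw [if_neg hTS, Pi.zero_apply]
      refine if_neg fun h ↦ hTS ?_
      rw [mul_assoc, Subgroup.mul_mem_cancel_left _ hw] at h
      have hTS' (x : ℕ) : x ∈ T ∨ m + 1 < x ↔ x ∈ S ∨ m + 1 < x := by
        rw [← hπ T hT, ← hπ S hS, ← mem_splitSubgroup.1 h (π S x), ← Perm.mul_apply,
          inv_mul_cancel_right]
      ext x
      have := hTS' x
      have := @(mem_powersetCard.1 hT).1 x
      have := @(mem_powersetCard.1 hS).1 x
      rw [mem_Icc] at *
      grind
  have hsum := hb φ
  rw [map_sum, LinearMap.sum_apply, Finset.sum_apply, Finset.sum_eq_single_of_mem S hS] at hsum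
  · rwa [map_mul, permRep_transfer k (Finset.erase_subset _ _), Module.End.mul_apply,
      permRep_eqOn_splitSubgroup _ (hφ hS) (one_mem _), if_pos rfl] at hsum
  · intro T hT hTS
    rw [map_mul, permRep_transfer k (Finset.erase_subset _ _), Module.End.mul_apply,
      permRep_eqOn_splitSubgroup _ (hφ hT) (one_mem _), if_neg hTS, map_zero, Pi.zero_apply]

lemma eq_zero_of_permRep_apply_one_eq_zero {J : Finset ℕ} {a : N k J}
    (ha : ∀ φ, permRep k J a φ 1 = 0) : a = 0 := by
  obtain rfl | hJ := J.eq_empty_or_nonempty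
  · obtain ⟨c, rfl⟩ := exists_eq_algebraMap a
    have hc := ha 1
    rw [AlgHom.commutes, Module.algebraMap_end_apply, Pi.smul_apply, Pi.one_apply, smul_eq_mul,
      mul_one] at hc
    rw [hc, map_zero]
  · obtain ⟨l, m, hlm⟩ := exists_isTopBlock hJ
    have hm : m ∈ J := hlm.Icc_subset (Finset.right_mem_Icc.2 hlm.le)
    obtain ⟨b, rfl⟩ := exists_eq_sum_transfer_mul_blockRep hlm hlm.le rfl a
    refine Finset.sum_eq_zero fun S hS ↦ ?_
    have := Finset.card_erase_lt_of_mem hm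
    have hbS : b S = 0 := eq_zero_of_permRep_apply_one_eq_zero
      (permRep_coefficient_eq_zero hlm.Icc_subset rfl ha hS)
    rw [hbS, map_zero, zero_mul]
termination_by J.card

lemma coefficient_eq_zero (hJ : Icc l m ⊆ J) (hr : p + r = m + 1)
    {b : Finset ℕ → N k (J.erase p)}
    (hb : ∑ S ∈ powersetCard r (Icc l (m + 1)),
      transfer k (J.erase p) J (b S) * blockRep k J m p S = 0)
    (hS : S ∈ powersetCard r (Icc l (m + 1))) : b S = 0 :=
  eq_zero_of_permRep_apply_one_eq_zero
    (permRep_coefficient_eq_zero hJ hr (fun φ ↦ by rw [hb, map_zero]; rfl) hS)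

instance preservesFiniteLimits_restrictScalars {A : Type u} {B : Type v} [Ring A] [Ring B]
    (f : A →+* B) : CategoryTheory.Limits.PreservesFiniteLimits (ModuleCat.restrictScalars.{w} f) :=
  ⟨fun _ _ _ ↦ ⟨inferInstance⟩⟩

open CategoryTheory in
lemma preservesProjectiveObjects_restrictScalars {A : Type u} {B : Type v} [Ring A] [Ring B]
    (f : A →+* B)
    [hf : Module.Projective A ((ModuleCat.restrictScalars f).obj (ModuleCat.of B B))] :
    (ModuleCat.restrictScalars.{max w v} f).PreservesProjectiveObjects := by
  have : (ModuleCat.coextendScalars.{u, v, max w v} f).PreservesEpimorphisms := by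
    refine ⟨fun g hg ↦ ?_⟩
    rw [ModuleCat.epi_iff_surjective] at hg ⊢
    intro ψ
    obtain ⟨φ, hφ⟩ := Module.projective_lifting_property g.hom
      (ModuleCat.CoextendScalars.equiv f _ ψ) hg
    exact ⟨(ModuleCat.CoextendScalars.equiv f _).symm φ, ModuleCat.CoextendScalars.ext hφ⟩
  exact Functor.preservesProjectiveObjects_of_adjunction_of_preservesEpimorphisms
    (ModuleCat.restrictCoextendScalarsAdj.{w} f)

lemma projective_restrictScalars_transfer (hJ : IsTopBlock J l m) (hlp : l ≤ p)
    (hp : p ≤ m + 1) :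
    Module.Projective (N k (J.erase p)) ((ModuleCat.restrictScalars
      (transfer k (J.erase p) J).toRingHom).obj (ModuleCat.of (N k J) (N k J))) := by
  obtain ⟨r, hr⟩ := Nat.exists_eq_add_of_le hp
  let v (S : powersetCard r (Icc l (m + 1))) : (ModuleCat.restrictScalars
    (transfer k (J.erase p) J).toRingHom).obj (ModuleCat.of (N k J) (N k J)) := blockRep k J m p S
  have hli : LinearIndependent (N k (J.erase p)) v := by
    refine Fintype.linearIndependent_iff.2 fun b hb S ↦ ?_
    let b' (T : Finset ℕ) : N k (J.erase p) := if hT : T ∈ _ then b ⟨T, hT⟩ else 0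
    have hb' : b' S = 0 := by
      refine coefficient_eq_zero hJ.Icc_subset hr.symm ?_ S.2
      rw [← Finset.sum_coe_sort]
      refine Eq.trans (Finset.sum_congr rfl fun T _ ↦ ?_) hb
      simp only [b', T.2, dif_pos]
      rfl
    simpa only [b', S.2, dif_pos] using hb'
  have hspan : ⊤ ≤ Submodule.span (N k (J.erase p)) (Set.range v) := fun a _ ↦ by
    obtain ⟨b, hb⟩ := exists_eq_sum_transfer_mul_blockRep hJ hlp hr.symm (show N k J from a)
    refine hb ▸ Submodule.sum_mem _ fun S hS ↦ ?_
    exact Submodule.smul_mem _ (b S) (Submodule.subset_span ⟨⟨S, hS⟩, rfl⟩)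
  exact Module.Projective.of_basis (Module.Basis.mk hli hspan)

lemma preservesProjectiveObjects_restrictScalars_transfer (hJ : IsTopBlock J l m) (hlp : l ≤ p)
    (hp : p ≤ m + 1) : (ModuleCat.restrictScalars.{0}
      (transfer k (J.erase p) J).toRingHom).PreservesProjectiveObjects :=
  have := projective_restrictScalars_transfer (k := k) hJ hlp hp
  preservesProjectiveObjects_restrictScalars.{0, 0, 0} (transfer k (J.erase p) J).toRingHom

end Freeness

section SubsetModules

open CategoryTheory

/-- The operator on functions on the `r`-element subsets of `[l, M]` which replaces a function `f`
by `f ∘ slide i` where that makes sense, and by `0` elsewhere. -/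
def subsetOp (l M r i : ℕ) : Module.End k (powersetCard r (Icc l M) → k) where
  toFun f S := if h : l ≤ i ∧ i ∉ S.1 ∧ i + 1 ∈ S.1 then
    f ⟨slide i S, slide_mem_powersetCard S.2 h.1 h.2.1 h.2.2⟩ else 0
  map_add' f g := by
    ext S
    simp only [Pi.add_apply]
    split_ifs <;> simp
  map_smul' c f := by
    ext S
    simp

lemma subsetOp_apply (l M r i : ℕ) (f : powersetCard r (Icc l M) → k)
    (S : powersetCard r (Icc l M)) :
    subsetOp k l M r i f S = if h : l ≤ i ∧ i ∉ S.1 ∧ i + 1 ∈ S.1 then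
      f ⟨slide i S, slide_mem_powersetCard S.2 h.1 h.2.1 h.2.2⟩ else 0 := rfl

lemma relations_subsetOp (l M r : ℕ) : Relations (subsetOp k l M r) where
  sq i := by
    refine LinearMap.ext fun f ↦ funext fun S ↦ ?_
    simp [subsetOp_apply, mem_slide]
  braid i := by
    refine LinearMap.ext fun f ↦ funext fun S ↦ ?_
    simp only [Module.End.mul_apply, subsetOp_apply, mem_slide]
    grind
  comm {i j} hij := by
    refine LinearMap.ext fun f ↦ funext fun S ↦ ?_
    simp only [Module.End.mul_apply, subsetOp_apply, slide_comm hij, mem_slide]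
    grind

variable {k} in
/-- The functions on the `r`-element subsets of `[l, M]` form a module over `N k J`, whatever `J`
is. -/
noncomputable instance (J : Finset ℕ) (l M r : ℕ) :
    Module (N k J) (powersetCard r (Icc l M) → k) :=
  Module.compHom _ (lift (subsetOp k l M r) (relations_subsetOp k l M r) : N k J →ₐ[k] _).toRingHom

/-- The trivial module of `N k J`. -/
noncomputable def triv (J : Finset ℕ) : ModuleCat (N k J) :=
  (ModuleCat.restrictScalars (aug k J).toRingHom).obj (ModuleCat.of k k)

lemma restrictScalars_triv (J J' : Finset ℕ) :
    (ModuleCat.restrictScalars (transfer k J J').toRingHom).obj (triv k J') = triv k J := by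
  rw [triv, triv, ← aug_comp_transfer k J J']
  rfl

variable {k} {J : Finset ℕ} {l M r : ℕ}

@[simp]
lemma algebraMap_smul_apply (c : k) (f : powersetCard r (Icc l M) → k) (S) :
    (algebraMap k (N k J) c • f) S = c * f S :=
  congr_fun (DFunLike.congr_fun (AlgHom.commutes
    (lift (subsetOp k l M r) (relations_subsetOp k l M r) : N k J →ₐ[k] _) c) f) S

lemma y_smul_apply {i : ℕ} (hi : i ∈ J) (f : powersetCard r (Icc l M) → k) (S) :
    (y k J i • f) S = if h : l ≤ i ∧ i ∉ S.1 ∧ i + 1 ∈ S.1 then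
      f ⟨slide i S, slide_mem_powersetCard S.2 h.1 h.2.1 h.2.2⟩ else 0 :=
  congr_fun (DFunLike.congr_fun (lift_y (relations_subsetOp k l M r) hi) f) S

@[simp]
lemma algebraMap_smul_triv (c : k) (x : triv k J) :
    algebraMap k (N k J) c • x = (c * (show k from x) : k) :=
  congrArg (fun b : k ↦ b * (show k from x)) ((aug k J).commutes c)

@[simp]
lemma y_smul_triv (i : ℕ) (x : triv k J) : y k J i • x = 0 :=
  (congrArg (fun b : k ↦ b * (show k from x)) (aug_y k J i)).trans (zero_mul _)

/-- A homomorphism of `N k J`-modules, given as an additive map which commutes with scalars and with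
the generators. -/
noncomputable def homOfGenerators {X Y : ModuleCat.{0} (N k J)} (g : X →+ Y)
    (hc : ∀ (c : k) x, g (algebraMap k (N k J) c • x) = algebraMap k (N k J) c • g x)
    (hy : ∀ i ∈ J, ∀ x, g (y k J i • x) = y k J i • g x) : X ⟶ Y :=
  ModuleCat.ofHom
    { g with
      map_smul' a := by
        change ∀ x, g (a • x) = a • g x
        induction a using N_induction with
        | algebraMap c => exact hc c
        | y i hi => exact hy i hi
        | add a b ha hb => exact fun x ↦ by rw [add_smul, map_add, ha, hb, add_smul]
        | mul a b ha hb => exact fun x ↦ by rw [mul_smul, ha, hb, mul_smul] }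

variable (k J l M r) in
/-- The module of functions on the `r`-element subsets of `[l, M]`. -/
noncomputable abbrev subsetModule : ModuleCat (N k J) :=
  ModuleCat.of (N k J) (powersetCard r (Icc l M) → k)

/-- The topmost `r`-element subset `[a, M]` of `[l, M]`. -/
def topSubset {a : ℕ} (ha : l ≤ a) (hr : a + r = M + 1) : powersetCard r (Icc l M) :=
  ⟨Icc a M, Icc_mem_powersetCard ha hr⟩

lemma erase_mem_powersetCard {S : Finset ℕ}
    (hS : S ∈ powersetCard (r + 1) (Icc l (M + 1))) (h : M + 1 ∈ S) :
    S.erase (M + 1) ∈ powersetCard r (Icc l M) := by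
  obtain ⟨hsub, hcard⟩ := mem_powersetCard.1 hS
  refine mem_powersetCard.2 ⟨fun x hx ↦ ?_, by rw [Finset.card_erase_of_mem h]; lia⟩
  have := mem_Icc.1 (hsub (Finset.mem_of_mem_erase hx))
  have := Finset.ne_of_mem_erase hx
  exact mem_Icc.2 (by lia)

lemma insert_mem_powersetCard {S : Finset ℕ}
    (hS : S ∈ powersetCard r (Icc l M)) (hl : l ≤ M + 1) :
    insert (M + 1) S ∈ powersetCard (r + 1) (Icc l (M + 1)) := by
  obtain ⟨hsub, hcard⟩ := mem_powersetCard.1 hS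
  have hM : M + 1 ∉ S := fun h ↦ by simpa using hsub h
  refine mem_powersetCard.2 ⟨Finset.insert_subset (mem_Icc.2 ⟨hl, le_rfl⟩)
    (hsub.trans (Finset.Icc_subset_Icc_right M.le_succ)), ?_⟩
  rw [Finset.card_insert_of_notMem hM, hcard]

lemma mem_powersetCard_succ {S : Finset ℕ}
    (hS : S ∈ powersetCard r (Icc l M)) :
    S ∈ powersetCard r (Icc l (M + 1)) :=
  Finset.powersetCard_mono (Finset.Icc_subset_Icc_right M.le_succ) hS

lemma mem_powersetCard_of_notMem {S : Finset ℕ}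
    (hS : S ∈ powersetCard r (Icc l (M + 1))) (h : M + 1 ∉ S) :
    S ∈ powersetCard r (Icc l M) := by
  obtain ⟨hsub, hcard⟩ := mem_powersetCard.1 hS
  refine mem_powersetCard.2 ⟨fun x hx ↦ ?_, hcard⟩
  have := mem_Icc.1 (hsub hx)
  have : x ≠ M + 1 := fun hxM ↦ h (hxM ▸ hx)
  exact mem_Icc.2 (by lia)

/-- Extension by zero along the inclusion `S ↦ insert (M + 1) S` of the subsets of `[l, M]` into
those of `[l, M + 1]`. -/
noncomputable def subsetInc (hJ : ∀ j ∈ J, j ≤ M) (r : ℕ) :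
    subsetModule k J l M r ⟶ subsetModule k J l (M + 1) (r + 1) :=
  homOfGenerators
    { toFun f S :=
        if h : M + 1 ∈ S.1 then f ⟨S.1.erase (M + 1), erase_mem_powersetCard S.2 h⟩ else 0
      map_zero' := by
        ext S
        split_ifs <;> rfl
      map_add' f g := by
        ext S
        simp only [Pi.add_apply]
        split_ifs <;> simp }
    (fun c f ↦ by
      ext S
      simp)
    (fun i hi f ↦ by
      ext S
      have := hJ i hi
      simp only [AddMonoidHom.coe_mk, ZeroHom.coe_mk, y_smul_apply hi, mem_slide, mem_erase]
      obtain rfl | hiM := this.eq_or_lt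
      · simp
      · simp only [slide_erase hiM]
        grind)

lemma subsetInc_apply (hJ : ∀ j ∈ J, j ≤ M) (f : powersetCard r (Icc l M) → k) (S) :
    ((subsetInc hJ r).hom f) S =
      if h : M + 1 ∈ S.1 then f ⟨S.1.erase (M + 1), erase_mem_powersetCard S.2 h⟩ else 0 := rfl

/-- Restriction of functions to the subsets of `[l, M]`. -/
noncomputable def subsetRes (r : ℕ) :
    subsetModule k J l (M + 1) r ⟶ subsetModule k J l M r :=
  homOfGenerators
    { toFun f S := f ⟨S, mem_powersetCard_succ S.2⟩
      map_zero' := rfl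
      map_add' _ _ := rfl }
    (fun c f ↦ by
      ext S
      simp)
    (fun i hi f ↦ by
      ext S
      simp only [AddMonoidHom.coe_mk, ZeroHom.coe_mk, y_smul_apply hi])

lemma subsetInc_comp_subsetRes (hJ : ∀ j ∈ J, j ≤ M) (r : ℕ) :
    (subsetInc hJ r : subsetModule k J l M r ⟶ _) ≫ subsetRes (r + 1) = 0 := by
  ext f : 2
  refine funext fun S ↦ dif_neg fun h ↦ ?_
  simpa using (mem_powersetCard.1 S.2).1 h

lemma subset_shortExact (hl : l ≤ M + 1) (hJ : ∀ j ∈ J, j ≤ M) (r : ℕ) :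
    (ShortComplex.mk (subsetInc hJ r : subsetModule k J l M r ⟶ _) (subsetRes (r + 1))
      (subsetInc_comp_subsetRes hJ r)).ShortExact := by
  refine ModuleCat.shortComplex_shortExact _ (fun f ↦ ⟨fun hf ↦ ?_, ?_⟩) ?_ ?_
  · refine ⟨fun S ↦ f ⟨insert (M + 1) S, insert_mem_powersetCard S.2 hl⟩, funext fun S ↦ ?_⟩
    refine (subsetInc_apply hJ _ S).trans ?_
    split_ifs with h
    · simp only [Finset.insert_erase h]
    · exact (congr_fun hf ⟨S.1, mem_powersetCard_of_notMem S.2 h⟩).symm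
  · rintro ⟨f, rfl⟩
    exact DFunLike.congr_fun (congrArg ModuleCat.Hom.hom (subsetInc_comp_subsetRes hJ r)) f
  · refine fun f g hfg ↦ funext fun S ↦ ?_
    have hM : M + 1 ∉ S.1 := fun h ↦ by simpa using (mem_powersetCard.1 S.2).1 h
    have h := (subsetInc_apply hJ f ⟨insert (M + 1) S, insert_mem_powersetCard S.2 hl⟩).symm.trans
      ((congr_fun hfg _).trans (subsetInc_apply hJ g _))
    simpa only [Finset.mem_insert_self, dif_pos, Finset.erase_insert hM] using h
  · intro f
    refine ⟨fun S ↦ if h : M + 1 ∈ S.1 then 0 else f ⟨S, mem_powersetCard_of_notMem S.2 h⟩,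
      funext fun S ↦ dif_neg fun h ↦ ?_⟩
    simpa using (mem_powersetCard.1 S.2).1 h

end SubsetModules

section Coinduction

open CategoryTheory

variable {k} {J : Finset ℕ} {l m p r : ℕ}

lemma blockRep_smul_apply (hJ : IsTopBlock J l m) (hlp : l ≤ p) (hr : p + r = m + 1)
    (S : powersetCard r (Icc l (m + 1)))
    (f : powersetCard r (Icc l (m + 1)) → k) :
    (blockRep k J m p S • f) (topSubset (Nat.le_succ_of_le hlp) (by lia)) = f S := by
  obtain ⟨S, hS⟩ := S
  suffices h : ∀ (hS : S ∈ powersetCard r (Icc l (m + 1)))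
      (f : powersetCard r (Icc l (m + 1)) → k),
      (blockRep k J m p S • f) (topSubset (Nat.le_succ_of_le hlp) (by lia)) =
        f ⟨S, hS⟩ from h hS f
  refine slide_induction hr ?base ?step S hS
  case base => exact fun _ f ↦ by rw [blockRep_Icc, one_smul, topSubset]
  case step =>
    intro S hS i hli him h₀ h₁ ih _ f
    have hi : i ∈ J := hJ.Icc_subset (mem_Icc.2 ⟨hli, by lia⟩)
    rw [← blockRep_mul_y_of_notMem_of_mem hr hS (by lia) h₀ h₁, mul_smul, ih hS, y_smul_apply hi,
      dif_pos ⟨hli, h₀, h₁⟩]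

variable (k J) in
/-- Evaluation at the topmost subset, which exhibits the module of functions on the subsets of
`[l, m + 1]` as coinduced from the trivial module. -/
noncomputable def evalTop (hlp : l ≤ p) (hr : p + r = m + 1) :
    (ModuleCat.restrictScalars (transfer k (J.erase p) J).toRingHom).obj
      (subsetModule k J l (m + 1) r) ⟶ triv k (J.erase p) :=
  homOfGenerators
    { toFun f := f (topSubset (Nat.le_succ_of_le hlp) (by lia))
      map_zero' := rfl
      map_add' _ _ := rfl }
    (fun c f ↦ by
      rw [algebraMap_smul_triv]
      refine Eq.trans ?_ (algebraMap_smul_apply (J := J) c f _)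
      exact congrArg (fun b : N k J ↦
        (b • f) (topSubset (Nat.le_succ_of_le hlp) (by lia)))
        ((transfer k (J.erase p) J).commutes c))
    (fun i hi f ↦ by
      obtain ⟨hip, hi⟩ := mem_erase.1 hi
      rw [y_smul_triv]
      refine (congrArg (fun b : N k J ↦
        (b • f) (topSubset (Nat.le_succ_of_le hlp) (by lia))) (transfer_erase_y k hip)).trans
          ((y_smul_apply hi f _).trans (dif_neg fun h ↦ hip ?_))
      simp only [topSubset, mem_Icc] at h
      lia)

lemma map_transfer_y_smul {X : ModuleCat (N k J)}
    (ψ : (ModuleCat.restrictScalars (transfer k (J.erase p) J).toRingHom).obj X ⟶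
      triv k (J.erase p)) {j : ℕ} (hj : j ≠ p) (x : X) : ψ.hom (y k J j • x) = 0 := by
  rw [← transfer_erase_y k hj]
  exact (ψ.hom.map_smul (y k (J.erase p) j) x).trans (y_smul_triv j _)

lemma map_algebraMap_smul {X : ModuleCat (N k J)}
    (ψ : (ModuleCat.restrictScalars (transfer k (J.erase p) J).toRingHom).obj X ⟶
      triv k (J.erase p)) (c : k) (x : X) :
    ψ.hom (algebraMap k (N k J) c • x) = (c * (show k from ψ.hom x) : k) := by
  rw [← (transfer k (J.erase p) J).commutes]
  exact (ψ.hom.map_smul (algebraMap k _ c) x).trans (algebraMap_smul_triv c _)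

/-- The adjoint of a homomorphism to the trivial module, for the coinduction adjunction. -/
noncomputable def coinductionLift (hJ : IsTopBlock J l m) (hr : p + r = m + 1)
    {X : ModuleCat (N k J)}
    (ψ : (ModuleCat.restrictScalars (transfer k (J.erase p) J).toRingHom).obj X ⟶
      triv k (J.erase p)) : X ⟶ subsetModule k J l (m + 1) r :=
  homOfGenerators
    { toFun x S := ψ.hom (blockRep k J m p S • x)
      map_zero' := funext fun S ↦ by rw [smul_zero]; exact map_zero ψ.hom
      map_add' x x' := funext fun S ↦ by rw [smul_add]; exact map_add ψ.hom _ _ }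
    (fun c x ↦ funext fun S ↦ by
      rw [algebraMap_smul_apply]
      refine Eq.trans ?_ (map_algebraMap_smul ψ c (blockRep k J m p S • x))
      rw [← mul_smul, Algebra.commutes, mul_smul]
      rfl)
    (fun i hi x ↦ funext fun ⟨S, hS⟩ ↦ by
      rw [y_smul_apply hi]
      change ψ.hom (blockRep k J m p S • y k J i • x) = _
      rw [← mul_smul]
      by_cases h : i ∈ S ↔ i + 1 ∈ S
      · obtain ⟨j, hj, hz⟩ := exists_blockRep_mul_y_of_mem_iff_mem (k := k) (J := J) hr hS
          (hJ.le_top hi) h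
        rw [hz, mul_smul, map_transfer_y_smul ψ hj, dif_neg (by tauto)]
        rfl
      · by_cases h₀ : i ∈ S
        · rw [blockRep_mul_y_of_mem_of_notMem hr hS (hJ.le_top hi) h₀ (by tauto), zero_smul,
            dif_neg (by tauto)]
          exact map_zero ψ.hom
        · have h₁ : i + 1 ∈ S := by tauto
          rw [blockRep_mul_y_of_notMem_of_mem hr hS (hJ.le_top hi) h₀ h₁,
            dif_pos ⟨hJ.le_of_slide hi hS h₁, h₀, h₁⟩]
          rfl)

lemma map_comp_evalTop_bijective (hJ : IsTopBlock J l m) (hlp : l ≤ p) (hr : p + r = m + 1)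
    (X : ModuleCat (N k J)) :
    Function.Bijective fun f : X ⟶ subsetModule k J l (m + 1) r ↦
      (ModuleCat.restrictScalars (transfer k (J.erase p) J).toRingHom).map f ≫
        evalTop k J hlp hr := by
  refine ⟨fun f g hfg ↦ ?_, fun ψ ↦ ⟨coinductionLift hJ hr ψ, ?_⟩⟩
  · have apply_eq (f : X ⟶ subsetModule k J l (m + 1) r) (x : X) (S) :
        f.hom x S = ((ModuleCat.restrictScalars (transfer k (J.erase p) J).toRingHom).map f ≫
          evalTop k J hlp hr).hom (blockRep k J m p S • x) :=
      (blockRep_smul_apply hJ hlp hr S (f.hom x)).symm.trans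
        (congr_fun (f.hom.map_smul (blockRep k J m p S) x).symm _)
    ext x : 2
    funext S
    exact (apply_eq f x S).trans
      ((DFunLike.congr_fun (congrArg ModuleCat.Hom.hom hfg) _).trans (apply_eq g x S).symm)
  · ext x
    change ψ.hom (blockRep k J m p (Icc (p + 1) (m + 1)) • x) = ψ.hom x
    rw [blockRep_Icc, one_smul]

end Coinduction

section Recursion

open CategoryTheory Abelian

variable {k} {J : Finset ℕ} {l m p r : ℕ}

variable (k J) in
/-- The embedding of the trivial module as the functions supported at the topmost subset. -/
noncomputable def socle {M a : ℕ} (ha : l ≤ a) (hr : a + r = M + 1) :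
    triv k J ⟶ subsetModule k J l M r :=
  homOfGenerators
    { toFun x := (Pi.single (topSubset ha hr) (show k from x) : _ → k)
      map_zero' := Pi.single_zero _
      map_add' := Pi.single_add (f := fun _ ↦ k) _ }
    (fun c x ↦ by
      ext S
      rw [algebraMap_smul_triv, algebraMap_smul_apply]
      exact congr_fun (Pi.single_smul' (topSubset ha hr) c (show k from x)) S)
    (fun i hi x ↦ by
      rw [y_smul_triv]
      refine (Pi.single_zero (M := fun _ ↦ k) (topSubset ha hr)).trans ?_
      ext S
      rw [y_smul_apply hi]
      refine (dite_eq_right_iff.2 fun h ↦ Pi.single_eq_of_ne (fun hS ↦ ?_) _).symm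
      have hmem (j : ℕ) : j ∈ slide i S.1 ↔ j ∈ Icc a M :=
        Finset.ext_iff.1 (congrArg Subtype.val hS) j
      have h₀ := hmem i
      have h₁ := hmem (i + 1)
      have := mem_Icc.1 ((mem_powersetCard.1 S.2).1 h.2.2)
      simp only [mem_slide, mem_Icc] at h₀ h₁
      lia)

lemma socle_apply_self {M a : ℕ} (ha : l ≤ a) (hr : a + r = M + 1) (x : triv k J) :
    (socle k J ha hr).hom x (topSubset ha hr) = x :=
  Pi.single_eq_same (M := fun _ ↦ k) (topSubset ha hr) (show k from x)

lemma isIso_socle {M a : ℕ} (ha : l ≤ a) (hr : a + r = M + 1)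
    [Subsingleton (powersetCard r (Icc l M))] : IsIso (socle k J ha hr) := by
  refine (ConcreteCategory.isIso_iff_bijective _).2 ⟨?_, fun f ↦ ⟨f (topSubset ha hr), ?_⟩⟩
  · exact Pi.single_injective (M := fun _ ↦ k) (topSubset ha hr)
  · funext S
    obtain rfl := Subsingleton.elim (topSubset ha hr) S
    exact socle_apply_self ha hr _

lemma subsetInc_apply_topSubset {M a : ℕ} (hJ : ∀ j ∈ J, j ≤ M) (ha : l ≤ a) (hr : a + r = M + 1)
    (f : powersetCard r (Icc l M) → k) :
    (subsetInc hJ r).hom f (topSubset ha (by lia)) = f (topSubset ha hr) := by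
  have hIcc : (Icc a (M + 1)).erase (M + 1) = Icc a M := by
    ext x
    simp only [mem_erase, mem_Icc]
    lia
  refine (subsetInc_apply hJ f _).trans ((dif_pos ?_).trans (congrArg f (Subtype.ext hIcc)))
  exact mem_Icc.2 (by lia)

variable (k) in
/-- The isomorphism of functors expressing that `N k J'` is a retract of `N k J`. -/
noncomputable def restrictScalarsTransferIso {J' : Finset ℕ} (h : J' ⊆ J) :
    ModuleCat.restrictScalars.{0} (transfer k J J').toRingHom ⋙
      ModuleCat.restrictScalars (transfer k J' J).toRingHom ≅ 𝟭 (ModuleCat (N k J')) :=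
  (ModuleCat.restrictScalarsComp' _ _ _ rfl).symm ≪≫
    ModuleCat.restrictScalarsId' _ (congrArg AlgHom.toRingHom (transfer_comp_transfer k h))

variable (k J) in
/-- The trivial module restricts to the trivial module. -/
noncomputable def restrictScalarsTrivIso (J' : Finset ℕ) :
    (ModuleCat.restrictScalars (transfer k J J').toRingHom).obj (triv k J') ≅ triv k J :=
  (ModuleCat.restrictScalarsComp'App _ _ _
    (congrArg AlgHom.toRingHom (aug_comp_transfer k J J').symm) _).symm

lemma exists_comp_mk₀_subsetInc_eq (hJ : IsTopBlock J l m) (hlp : l ≤ p) (hr : p + r = m) {n : ℕ}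
    (x : Ext.{0} (triv k J) (subsetModule k J l (m + 1) (r + 1)) n) :
    ∃ z : Ext (triv k J) (subsetModule k J l m r) n,
      z.comp (.mk₀ (subsetInc (fun _ ↦ hJ.le_top) r)) (add_zero n) = x := by
  have hr' : p + (r + 1) = m + 1 := by lia
  have := preservesProjectiveObjects_restrictScalars_transfer (k := k) hJ hlp (by lia)
  let s : triv k J ⟶ subsetModule k J l m r := socle k J (Nat.le_succ_of_le hlp) (by lia)
  let σ := (restrictScalarsTrivIso k J (J.erase p)).hom ≫ s
  have hσ : (ModuleCat.restrictScalars (transfer k (J.erase p) J).toRingHom).map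
      (σ ≫ subsetInc (fun _ ↦ hJ.le_top) r) ≫ evalTop k J hlp hr' =
      (restrictScalarsTransferIso k (Finset.erase_subset p J)).hom.app (triv k (J.erase p)) := by
    ext x
    exact (subsetInc_apply_topSubset (k := k) (fun _ ↦ hJ.le_top) (Nat.le_succ_of_le hlp)
      (by lia) _).trans (socle_apply_self (k := k) (J := J) _ _ _)
  revert x
  rw [← restrictScalars_triv k J (J.erase p)]
  intro x
  obtain ⟨z, hz⟩ := exists_comp_mk₀_eq_of_section
    (ModuleCat.restrictScalars.{0} (transfer k (J.erase p) J).toRingHom)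
    (ModuleCat.restrictScalars.{0} (transfer k J (J.erase p)).toRingHom)
    (restrictScalarsTransferIso k (Finset.erase_subset p J)) (evalTop k J hlp hr')
    (map_comp_evalTop_bijective hJ hlp hr') _ hσ x
  exact ⟨z.comp (.mk₀ σ) (add_zero n), by
    rw [Ext.comp_assoc_of_third_deg_zero, Ext.mk₀_comp_mk₀, hz]⟩

lemma rank_ext_subsetModule_top (hJ : IsTopBlock J l m) (hlp : l ≤ p) (hr : p + r = m + 1) (n : ℕ) :
    Module.rank k (Ext.{0} (triv k J) (subsetModule k J l (m + 1) r) n) =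
      Module.rank k (Ext.{0} (triv k (J.erase p)) (triv k (J.erase p)) n) := by
  have := preservesProjectiveObjects_restrictScalars_transfer (k := k) hJ hlp (by lia)
  rw [rank_ext_eq_of_shapiro _ (evalTop k J hlp hr) k (map_comp_evalTop_bijective hJ hlp hr),
    restrictScalars_triv]

lemma rank_ext_subsetModule_succ (hJ : IsTopBlock J l m) (hlp : l ≤ p) (hr : p + r = m) (n : ℕ) :
    Module.rank k (Ext.{0} (triv k J) (subsetModule k J l m r) (n + 1)) =
      Module.rank k (Ext.{0} (triv k (J.erase p)) (triv k (J.erase p)) (n + 1)) +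
        Module.rank k (Ext.{0} (triv k J) (subsetModule k J l m (r + 1)) n) := by
  rw [← rank_ext_subsetModule_top hJ hlp (show p + (r + 1) = m + 1 by lia)]
  exact rank_ext_succ_eq_add (subset_shortExact (by lia) (fun _ ↦ hJ.le_top) r) _ n
    fun _ ↦ exists_comp_mk₀_subsetInc_eq hJ hlp hr

lemma rank_ext_subsetModule_zero (hJ : IsTopBlock J l m) (hlp : l ≤ p) (hr : p + r = m) :
    Module.rank k (Ext.{0} (triv k J) (subsetModule k J l m r) 0) =
      Module.rank k (Ext.{0} (triv k (J.erase p)) (triv k (J.erase p)) 0) := by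
  rw [← rank_ext_subsetModule_top hJ hlp (show p + (r + 1) = m + 1 by lia)]
  exact rank_ext_zero_eq_of_surjective (subset_shortExact (by lia) (fun _ ↦ hJ.le_top) r) _
    (exists_comp_mk₀_subsetInc_eq hJ hlp hr)

lemma rank_ext_subsetModule_eq_rank_ext_triv {M a : ℕ} (ha : l ≤ a) (hr : a + r = M + 1)
    [Subsingleton (powersetCard r (Icc l M))] (X : ModuleCat (N k J)) (n : ℕ) :
    Module.rank k (Ext.{0} X (subsetModule k J l M r) n) =
      Module.rank k (Ext.{0} X (triv k J) n) :=
  have := isIso_socle (k := k) (J := J) ha hr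
  (rank_ext_eq_of_shapiro (𝟭 _) (socle k J ha hr) k
    (fun _ ↦ (asIso (socle k J ha hr)).homToEquiv.bijective) X n).symm

lemma rank_ext_subsetModule_empty (hlm : l ≤ m + 1) (X : ModuleCat (N k J)) (n : ℕ) :
    Module.rank k (Ext.{0} X (subsetModule k J l m 0) n) =
      Module.rank k (Ext.{0} X (triv k J) n) := by
  have : Subsingleton (powersetCard 0 (Icc l m)) := by
    rw [Finset.powersetCard_zero]
    infer_instance
  exact rank_ext_subsetModule_eq_rank_ext_triv hlm (add_zero _) X n

lemma rank_ext_subsetModule_full (hr : l + r = m + 1) (X : ModuleCat (N k J)) (n : ℕ) :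
    Module.rank k (Ext.{0} X (subsetModule k J l m r) n) =
      Module.rank k (Ext.{0} X (triv k J) n) := by
  have : Subsingleton (powersetCard r (Icc l m)) := by
    have hcard : r = (Icc l m).card := by
      rw [Nat.card_Icc]
      lia
    rw [hcard, Finset.powersetCard_self]
    infer_instance
  exact rank_ext_subsetModule_eq_rank_ext_triv le_rfl hr X n

lemma rank_ext_subsetModule {q : ℕ} (hJ : IsTopBlock J l m)
    (h : ∀ p ∈ Icc l m, ∀ n, Module.rank k
      (Ext.{0} (triv k (J.erase p)) (triv k (J.erase p)) n) = (q.multichoose n : ℕ))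
    (hr : l + r ≤ m + 1) (n : ℕ) :
    Module.rank k (Ext.{0} (triv k J) (subsetModule k J l m r) n) =
      ((q + 1).multichoose n : ℕ) := by
  have h_erase {r : ℕ} (hr : l + r ≤ m) := h (m - r) (mem_Icc.2 (by lia))
  have of_le {n c : ℕ} (hc : ∀ {r}, l + r ≤ m →
      Module.rank k (Ext.{0} (triv k J) (subsetModule k J l m r) n) = c) {r : ℕ}
      (hr : l + r ≤ m + 1) :
      Module.rank k (Ext.{0} (triv k J) (subsetModule k J l m r) n) = c := by
    obtain hr | hr := hr.lt_or_eq
    · exact hc (Nat.lt_succ_iff.1 hr)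
    · rw [rank_ext_subsetModule_full hr,
        ← rank_ext_subsetModule_empty (Nat.le_succ_of_le hJ.le), hc hJ.le]
  induction n generalizing r with
  | zero =>
    refine of_le (fun {r} hr ↦ ?_) hr
    rw [rank_ext_subsetModule_zero (p := m - r) hJ (by lia) (by lia), h_erase hr,
      Nat.multichoose_zero_right, Nat.multichoose_zero_right]
  | succ n ih =>
    refine of_le (fun {r} hr ↦ ?_) hr
    rw [rank_ext_subsetModule_succ (p := m - r) hJ (by lia) (by lia), h_erase hr, ih (by lia),
      Nat.multichoose_succ_succ, Nat.cast_add]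

lemma algebraMap_smul_one (c : k) :
    algebraMap k (N k J) c • (show triv k J from (1 : k)) = (show triv k J from c) :=
  (algebraMap_smul_triv c _).trans (mul_one c)

lemma triv_hom_ext {X : ModuleCat (N k J)} {f g : triv k J ⟶ X}
    (h : f.hom (show triv k J from (1 : k)) = g.hom (show triv k J from (1 : k))) : f = g := by
  ext x
  have hx := algebraMap_smul_one (J := J) (show k from x)
  exact (congrArg f.hom hx).symm.trans ((f.hom.map_smul _ _).trans
    ((congrArg _ h).trans ((g.hom.map_smul _ _).symm.trans (congrArg g.hom hx))))

instance projective_triv_empty : Projective (triv k ∅) := by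
  let f : N k ∅ →ₗ[N k ∅] triv k ∅ := LinearMap.toSpanSingleton _ _ (show triv k ∅ from (1 : k))
  have hf (c : k) : f (algebraMap k _ c) = (show triv k ∅ from c) := algebraMap_smul_one c
  have hbij : Function.Bijective f := by
    refine ⟨(injective_iff_map_eq_zero f).2 fun a ha ↦ ?_, fun c ↦ ⟨_, hf c⟩⟩
    obtain ⟨c, rfl⟩ := exists_eq_algebraMap a
    exact (congrArg (algebraMap k _) ((hf c).symm.trans ha)).trans (map_zero _)
  have := Module.Projective.of_equiv (LinearEquiv.ofBijective f hbij)
  exact (IsProjective.iff_projective (triv k ∅)).1 this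

lemma rank_end_triv (J : Finset ℕ) : Module.rank k (triv k J ⟶ triv k J) = 1 := by
  let e : k →ₗ[k] (triv k J ⟶ triv k J) := LinearMap.toSpanSingleton _ _ (𝟙 _)
  have he (c : k) : (e c).hom (show triv k J from (1 : k)) = (show triv k J from c) :=
    algebraMap_smul_one c
  have hbij : Function.Bijective e :=
    ⟨fun c c' h ↦ (he c).symm.trans (h ▸ he c'), fun f ↦ ⟨_, triv_hom_ext (he _)⟩⟩
  rw [← (LinearEquiv.ofBijective e hbij).rank_eq, Module.rank_self]

lemma rank_ext_triv_empty (n : ℕ) :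
    Module.rank k (Ext.{0} (triv k ∅) (triv k ∅) n) = (Nat.multichoose 0 n : ℕ) := by
  obtain _ | n := n
  · rw [Ext.linearEquiv₀.rank_eq, rank_end_triv, Nat.multichoose_zero_right, Nat.cast_one]
  · have : Subsingleton (Ext.{0} (triv k ∅) (triv k ∅) (n + 1)) :=
      subsingleton_of_forall_eq 0 Ext.eq_zero_of_projective
    rw [rank_subsingleton', Nat.multichoose_zero_succ, Nat.cast_zero]

lemma rank_ext_triv (J : Finset ℕ) (n : ℕ) :
    Module.rank k (Ext.{0} (triv k J) (triv k J) n) = (J.card.multichoose n : ℕ) := by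
  induction J using Finset.eraseInduction generalizing n with | H J ih => ?_
  obtain rfl | hne := J.eq_empty_or_nonempty
  · exact rank_ext_triv_empty n
  obtain ⟨l, m, hJ⟩ := exists_isTopBlock hne
  obtain ⟨q, hq⟩ := Nat.exists_eq_add_one.2 hne.card_pos
  rw [hq, ← rank_ext_subsetModule_empty (Nat.le_succ_of_le hJ.le)]
  refine rank_ext_subsetModule hJ (fun p hp n ↦ ?_) (Nat.le_succ_of_le hJ.le) n
  rw [ih p (hJ.Icc_subset hp), Finset.card_erase_of_mem (hJ.Icc_subset hp), hq, Nat.add_sub_cancel]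

end Recursion

section Presentation

open CategoryTheory Abelian

variable (n : ℕ)

/-- The `i`-th generator of `Nring k n`, which is `0` outside `1 ≤ i ≤ n - 1`. -/
noncomputable def nringY (i : ℕ) : Nring k n := RingQuot.mkAlgHom k (NRel k n) (Yf k n i)

variable {n} in
lemma mkAlgHom_ι (i : NIdx n) :
    RingQuot.mkAlgHom k (NRel k n) (FreeAlgebra.ι k i) = nringY k n i.1 :=
  congrArg (RingQuot.mkAlgHom k (NRel k n)) (dif_pos i.2 : Yf k n i = _).symm

variable {n} in
lemma nringY_eq_zero {i : ℕ} (hi : ¬(1 ≤ i ∧ i + 1 ≤ n)) : nringY k n i = 0 :=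
  (congrArg (RingQuot.mkAlgHom k (NRel k n)) (dif_neg hi)).trans (map_zero _)

lemma relations_nringY : Relations (nringY k n) where
  sq i := by
    by_cases h : 1 ≤ i ∧ i + 1 ≤ n
    · simpa only [map_mul, mkAlgHom_ι, map_zero] using
        RingQuot.mkAlgHom_rel k (NRel.sq (k := k) (n := n) ⟨i, h⟩)
    · rw [nringY_eq_zero k h, zero_mul]
  braid i := by
    by_cases h : 1 ≤ i ∧ i + 1 ≤ n; swap
    · rw [nringY_eq_zero k h, zero_mul, zero_mul, mul_zero, zero_mul]
    by_cases h' : 1 ≤ i + 1 ∧ i + 1 + 1 ≤ n; swap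
    · rw [nringY_eq_zero k h', mul_zero, zero_mul, mul_zero]
    simpa only [map_mul, mkAlgHom_ι] using
      RingQuot.mkAlgHom_rel k (NRel.braid (k := k) (n := n) ⟨i, h⟩ ⟨i + 1, h'⟩ rfl)
  comm {i j} hij := by
    by_cases h : 1 ≤ i ∧ i + 1 ≤ n; swap
    · rw [nringY_eq_zero k h, zero_mul, mul_zero]
    by_cases h' : 1 ≤ j ∧ j + 1 ≤ n; swap
    · rw [nringY_eq_zero k h', zero_mul, mul_zero]
    simpa only [map_mul, mkAlgHom_ι] using
      RingQuot.mkAlgHom_rel k (NRel.comm (k := k) (n := n) ⟨i, h⟩ ⟨j, h'⟩ (Or.inl hij))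

variable {k n} in
lemma nring_hom_ext {R : Type*} [Ring R] [Algebra k R] {f g : Nring k n →ₐ[k] R}
    (h : ∀ i : NIdx n, f (nringY k n i.1) = g (nringY k n i.1)) : f = g := by
  refine RingQuot.ringQuot_ext' _ _ _ (FreeAlgebra.hom_ext (funext fun i ↦ ?_))
  simpa only [Function.comp_apply, AlgHom.comp_apply, mkAlgHom_ι] using h i

variable {k n} in
/-- The algebra homomorphism from `Nring k n` determined by a sequence of elements satisfying the
nilCoxeter relations. -/
noncomputable def nringLift {R : Type*} [Ring R] [Algebra k R] (f : ℕ → R) (hf : Relations f) :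
    Nring k n →ₐ[k] R :=
  RingQuot.liftAlgHom k ⟨FreeAlgebra.lift k fun i : NIdx n ↦ f i.1, by
    rintro _ _ (i | ⟨i, j, h⟩ | ⟨i, j, h | h⟩)
    · simpa only [map_mul, FreeAlgebra.lift_ι_apply, map_zero] using hf.sq i.1
    · simpa only [map_mul, FreeAlgebra.lift_ι_apply, h] using hf.braid i.1
    · simpa only [map_mul, FreeAlgebra.lift_ι_apply] using hf.comm h
    · simpa only [map_mul, FreeAlgebra.lift_ι_apply] using (hf.comm h).symm⟩

lemma nringLift_nringY {R : Type*} [Ring R] [Algebra k R] {f : ℕ → R} (hf : Relations f)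
    (i : NIdx n) : nringLift (k := k) f hf (nringY k n i.1) = f i.1 := by
  rw [← mkAlgHom_ι]
  exact (RingQuot.liftAlgHom_mkAlgHom_apply _ _ _ _).trans (FreeAlgebra.lift_ι_apply _ _)

lemma Naug_nringY (i : NIdx n) : Naug k n (nringY k n i.1) = 0 := by
  rw [← mkAlgHom_ι]
  exact (RingQuot.liftAlgHom_mkAlgHom_apply _ _ _ _).trans (FreeAlgebra.lift_ι_apply _ _)

/-- The identification of `Nring k n` with the parabolic nilCoxeter algebra of the full set of
generators. -/
noncomputable def nringEquiv : Nring k n ≃ₐ[k] N k (Finset.Ico 1 n) :=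
  AlgEquiv.ofAlgHom (nringLift (y k _) (relations_y k _)) (lift (nringY k n) (relations_nringY k n))
    (N_hom_ext fun i hi ↦ by
      rw [AlgHom.comp_apply, lift_y _ hi]
      exact nringLift_nringY k n _ ⟨i, Finset.mem_Ico.1 hi⟩)
    (nring_hom_ext fun i ↦ by
      rw [AlgHom.comp_apply, nringLift_nringY, lift_y _ (Finset.mem_Ico.2 i.2)]
      rfl)

lemma aug_comp_nringEquiv :
    (aug k _).comp (nringEquiv k n : Nring k n →ₐ[k] N k (Finset.Ico 1 n)) = Naug k n :=
  nring_hom_ext fun i ↦ by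
    rw [Naug_nringY]
    exact (congrArg _ (nringLift_nringY k n _ i)).trans (aug_y k _ _)

/-- The trivial module of `Nring k n`. -/
noncomputable def nringTriv : ModuleCat (Nring k n) :=
  (ModuleCat.restrictScalars (Naug k n).toRingHom).obj (ModuleCat.of k k)

lemma restrictScalars_nringEquiv_triv :
    (ModuleCat.restrictScalars
      (nringEquiv k n : Nring k n →ₐ[k] N k (Finset.Ico 1 n)).toRingHom).obj (triv k _) =
    nringTriv k n := by
  rw [nringTriv, ← aug_comp_nringEquiv]
  rfl

variable {k} in
lemma rank_ext_restrictScalars {A B : Type} [Ring A] [Algebra k A] [Ring B] [Algebra k B]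
    (e : A ≃ₐ[k] B) (X Y : ModuleCat.{0} B) (d : ℕ) :
    Module.rank k (Ext.{0} X Y d) =
      Module.rank k (Ext.{0} ((ModuleCat.restrictScalars (e : A →ₐ[k] B).toRingHom).obj X)
        ((ModuleCat.restrictScalars (e : A →ₐ[k] B).toRingHom).obj Y) d) :=
  let F := ModuleCat.restrictScalars.{0} (e : A →ₐ[k] B).toRingHom
  have : F.IsEquivalence := ModuleCat.restrictScalars_isEquivalence_of_ringEquiv e.toRingEquiv
  (LinearEquiv.ofBijective (F.mapExtLinearMap k X Y d)
    (F.mapExt_bijective_of_preservesProjectiveObjects X Y d)).rank_eq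

lemma rank_ext_nringTriv (d : ℕ) : Module.rank k (Ext.{0} (nringTriv k n) (nringTriv k n) d) =
    ((n - 1).multichoose d : ℕ) := by
  rw [← restrictScalars_nringEquiv_triv, ← rank_ext_restrictScalars, rank_ext_triv, Nat.card_Ico]

lemma multichoose_sub_one {n : ℕ} (hn : 2 ≤ n) (d : ℕ) :
    (n - 1).multichoose d = (d + n - 2).choose (n - 2) := by
  obtain ⟨m, rfl⟩ := Nat.exists_eq_add_of_le hn
  rw [Nat.multichoose_eq, show 2 + m - 1 + d - 1 = m + d by lia,
    show d + (2 + m) - 2 = m + d by lia, Nat.add_sub_cancel_left, Nat.choose_symm_add]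

end Presentation

end NilCoxeter

open CategoryTheory in
/-- For the trivial `kN(n)`-module `k` (each `Y_i` acting as zero), the
`k`-vector space `Ext^d_{kN(n)}(k, k)` has dimension `(d + n - 2).choose (n - 2)`. -/
theorem Nring_ext_rank_choose (n : ℕ) (hn : 2 ≤ n) (d : ℕ) :
    letI : Module (Nring k n) k := Module.compHom k (Naug k n).toRingHom
    Module.rank k
      (((Ext k (ModuleCat (Nring k n)) d).obj
          (Opposite.op (ModuleCat.of (Nring k n) k))).obj
        (ModuleCat.of (Nring k n) k)) = ((d + n - 2).choose (n - 2)) := by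
  exact (NilCoxeter.rank_derivedExt_eq_rank_ext _ _ d).trans
    ((NilCoxeter.rank_ext_nringTriv k n d).trans
      (congrArg Nat.cast (NilCoxeter.multichoose_sub_one hn d)))
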